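/- arXiv:0708.2082 — 3 statements merged into one kernel-verified Lean document; each statement's English description precedes it below -/
import Mathlib

section
/- Let f=(m,n,k) be an integer binary quadratic form with discriminant Δ=k²−4mn>0 not a perfect square. The period Γ(f) is of even length and neither palindromic nor bipalindromic if and only if the class of f is asymmetric, i.e., f is SL(2,ℤ)-equivalent to none of its conjugate (m,n,−k), its adjoint (−n,−m,k) and its antipodal (−n,−m,−k). -/
/-- Iterates of the Gauss map starting from `ξ`. -/
noncomputable def gaussIter (ξ : ℝ) : ℕ → ℝ
  | 0 => ξ
  | n + 1 => 1 / (gaussIter ξ n - (⌊gaussIter ξ n⌋ : ℝ))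

/-- The `n`-th partial quotient of the regular continued fraction expansion of `ξ`. -/
noncomputable def cfTerm (ξ : ℝ) (n : ℕ) : ℤ := ⌊gaussIter ξ n⌋

/-- The continued fraction expansion of `ξ` is periodic with period length `P` from index `N`. -/
def IsEventuallyPeriodicCF (ξ : ℝ) (N P : ℕ) : Prop :=
  1 ≤ P ∧ ∀ j : ℕ, cfTerm ξ (N + j + P) = cfTerm ξ (N + j)

/-- `s` is the (minimal) period of the eventually periodic regular continued fraction
expansion of `ξ`; it is well defined up to cyclic permutation. -/
def IsCFPeriod (s : List ℤ) (ξ : ℝ) : Prop :=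
  s ≠ [] ∧
  (∃ N : ℕ, ∀ j : ℕ, cfTerm ξ (N + j) = s.getD (j % s.length) 0) ∧
  (∀ P : ℕ, 1 ≤ P → (∃ N : ℕ, IsEventuallyPeriodicCF ξ N P) → s.length ≤ P)

/-- The value of the binary quadratic form `f = (m, n, k)`, i.e. `m*x^2 + n*y^2 + k*x*y`. -/
def qval (f : ℤ × ℤ × ℤ) (x y : ℤ) : ℤ := f.1 * x ^ 2 + f.2.1 * y ^ 2 + f.2.2 * x * y

/-- The discriminant `k^2 - 4*m*n` of the form `f = (m, n, k)`. -/
def formDisc (f : ℤ × ℤ × ℤ) : ℤ := f.2.2 ^ 2 - 4 * f.1 * f.2.1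

/-- `SL(2,ℤ)`-equivalence of binary quadratic forms. -/
def SLEquiv (f g : ℤ × ℤ × ℤ) : Prop :=
  ∃ a b c d : ℤ, a * d - b * c = 1 ∧
    ∀ x y : ℤ, qval g x y = qval f (a * x + b * y) (c * x + d * y)

/-- The root with the plus sign of `m*ξ^2 + k*ξ + n = 0`, for `f = (m, n, k)`. -/
noncomputable def xiPlus (f : ℤ × ℤ × ℤ) : ℝ :=
  (-(f.2.2 : ℝ) + Real.sqrt ((formDisc f : ℤ) : ℝ)) / (2 * (f.1 : ℝ))

/-- The root with the minus sign of `m*ξ^2 + k*ξ + n = 0`, for `f = (m, n, k)`. -/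
noncomputable def xiMinus (f : ℤ × ℤ × ℤ) : ℝ :=
  (-(f.2.2 : ℝ) - Real.sqrt ((formDisc f : ℤ) : ℝ)) / (2 * (f.1 : ℝ))

/-- The conjugate `(m, n, -k)` of the form `(m, n, k)`. -/
def conjF (f : ℤ × ℤ × ℤ) : ℤ × ℤ × ℤ := (f.1, f.2.1, -f.2.2)

/-- The adjoint `(-n, -m, k)` of the form `(m, n, k)`. -/
def adjF (f : ℤ × ℤ × ℤ) : ℤ × ℤ × ℤ := (-f.2.1, -f.1, f.2.2)

/-- The antipodal `(-n, -m, -k)` of the form `(m, n, k)`. -/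
def antipF (f : ℤ × ℤ × ℤ) : ℤ × ℤ × ℤ := (-f.2.1, -f.1, -f.2.2)

/-- A form `(m, n, k)` is primitive if `gcd(m, n, k) = 1`. -/
def IsPrimitiveForm (f : ℤ × ℤ × ℤ) : Prop := Int.gcd f.1 (Int.gcd f.2.1 f.2.2) = 1

/-- A finite sequence is palindromic if some cyclic permutation of it equals its reversal. -/
def Palindromic (s : List ℤ) : Prop := ∃ t : List ℤ, List.IsRotated s t ∧ t.reverse = t

/-- A finite sequence is bipalindromic if some cyclic permutation of it is the concatenation
of two palindrome blocks each of odd length. -/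
def Bipalindromic (s : List ℤ) : Prop :=
  ∃ u v : List ℤ, List.IsRotated s (u ++ v) ∧ Odd u.length ∧ Odd v.length ∧
    u.reverse = u ∧ v.reverse = v

/-!
An integer matrix of determinant `±1` acts on irrational numbers by linear fractional
transformations, and Serret's theorem says that two irrationals lie in one orbit exactly when their
continued fractions have a common tail; the determinants that occur are the signs
`(-1) ^ (r + t)`, where `r` and `t` are positions at which a common tail starts. Since a form of
given discriminant is determined by its root `ξ⁺`, this turns `SL(2, ℤ)`-equivalence of forms into
tail equivalence of roots with an even shift. The roots of the conjugate, adjoint and antipodal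
forms are `-ξ⁻`, `-1 / ξ⁻` and `1 / ξ⁺`, and both negation and inversion are tail equivalences with
an odd shift. So the three symmetries mean that `ξ⁺` is tail equivalent to `ξ⁻` with an odd shift,
to `ξ⁻` with an even shift, and to `ξ⁺` itself with an odd shift.

The last condition says that the period has odd length. For the other two, the period matrix of
`ξ⁺` fixes `ξ⁻`, so its transpose, which is the matrix of the reversed period, fixes `-1 / ξ⁻`
(Galois). Hence `ξ⁺` and `ξ⁻` are tail equivalent if and only if the period is a rotation of its
reversal, which happens if and only if some rotation of it is a product of two palindromes.
-/

section GaussMap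

theorem gaussIter_succ (x : ℝ) (n : ℕ) : gaussIter x (n + 1) = (Int.fract (gaussIter x n))⁻¹ :=
  one_div _

theorem gaussIter_add (x : ℝ) (m n : ℕ) :
    gaussIter x (m + n) = gaussIter (gaussIter x m) n := by
  induction n with
  | zero => rfl
  | succ n ih => rw [← Nat.add_assoc, gaussIter_succ, gaussIter_succ, ih]

theorem cfTerm_gaussIter (x : ℝ) (m n : ℕ) :
    cfTerm (gaussIter x m) n = cfTerm x (m + n) := by
  rw [cfTerm, cfTerm, gaussIter_add]

theorem cfTerm_add_inv_gaussIter (x : ℝ) (n : ℕ) :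
    cfTerm x n + (gaussIter x (n + 1))⁻¹ = gaussIter x n := by
  rw [gaussIter_succ, inv_inv, cfTerm, Int.floor_add_fract]

theorem gaussIter_one_add_intCast (x : ℝ) (q : ℤ) :
    gaussIter (x + q) 1 = gaussIter x 1 := by
  rw [gaussIter_succ, gaussIter_succ]
  exact congrArg _ (Int.fract_add_intCast x q)

theorem floor_intCast_add_inv {y : ℝ} (hy : 1 < y) (a : ℤ) : ⌊a + y⁻¹⌋ = a := by
  rw [Int.floor_intCast_add, Int.floor_eq_zero_iff.mpr ⟨by positivity, inv_lt_one_of_one_lt₀ hy⟩,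
    add_zero]

theorem gaussIter_one_intCast_add_inv {y : ℝ} (hy : 1 < y) (a : ℤ) :
    gaussIter (a + y⁻¹) 1 = y := by
  rw [gaussIter_succ, gaussIter, Int.fract, floor_intCast_add_inv hy, add_sub_cancel_left, inv_inv]

theorem gaussIter_one_inv {y : ℝ} (hy : 1 < y) : gaussIter y⁻¹ 1 = y := by
  simpa using gaussIter_one_intCast_add_inv hy 0

theorem gaussIter_one_of_one_lt_inv {y : ℝ} (hy : 1 < y⁻¹) : gaussIter y 1 = y⁻¹ := by
  simpa only [inv_inv] using gaussIter_one_inv hy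

variable {x y : ℝ}

theorem irrational_gaussIter (hx : Irrational x) (n : ℕ) : Irrational (gaussIter x n) := by
  induction n with
  | zero => exact hx
  | succ n ih => rw [gaussIter_succ]; exact (ih.sub_intCast _).inv

theorem one_lt_gaussIter_succ (hx : Irrational x) (n : ℕ) : 1 < gaussIter x (n + 1) := by
  have hfract : Irrational (Int.fract (gaussIter x n)) := (irrational_gaussIter hx n).sub_intCast _
  rw [gaussIter_succ]
  exact (one_lt_inv₀ ((Int.fract_nonneg _).lt_of_ne' hfract.ne_zero)).mpr (Int.fract_lt_one _)

theorem one_le_cfTerm (hx : Irrational x) {n : ℕ} (hn : n ≠ 0) : 1 ≤ cfTerm x n := by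
  obtain ⟨k, rfl⟩ := Nat.exists_eq_succ_of_ne_zero hn
  exact Int.le_floor.mpr (by exact_mod_cast (one_lt_gaussIter_succ hx k).le)

open GenContFract in
theorem intFractPair_stream_eq_some (hx : Irrational x) (n : ℕ) :
    IntFractPair.stream x n = some (IntFractPair.of (gaussIter x n)) := by
  induction n with
  | zero => exact IntFractPair.stream_zero x
  | succ n ih =>
    have hfract : Int.fract (gaussIter x n) ≠ 0 :=
      ((irrational_gaussIter hx n).sub_intCast _).ne_zero
    rw [gaussIter_succ]
    exact IntFractPair.stream_succ_of_some ih hfract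

open GenContFract in
theorem eq_of_cfTerm_eq (hx : Irrational x) (hy : Irrational y)
    (h : ∀ n, cfTerm x n = cfTerm y n) : x = y := by
  have hpair {z : ℝ} (hz : Irrational z) (n : ℕ) :
      (GenContFract.of z).s.get? n = some ⟨1, cfTerm z (n + 1)⟩ :=
    get?_of_eq_some_of_succ_get?_intFractPair_stream (intFractPair_stream_eq_some hz (n + 1))
  have hof : GenContFract.of x = GenContFract.of y := by
    refine GenContFract.ext ?_ (Stream'.Seq.ext fun n => ?_)
    · rw [of_h_eq_floor, of_h_eq_floor]
      exact congrArg _ (h 0)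
    · rw [hpair hx, hpair hy, h]
  exact tendsto_nhds_unique (of_convergence x) (hof ▸ of_convergence y)

end GaussMap

section TailEquiv

/-- `TailEquiv ε x y` says that the continued fraction expansions of `x` and `y` agree after
dropping `r` terms of the first and `t` terms of the second, where `ε = (-1) ^ (r + t)` records
the parity of the shift. -/
def TailEquiv (ε : ℤˣ) (x y : ℝ) : Prop :=
  ∃ r t : ℕ, gaussIter x r = gaussIter y t ∧ (-1) ^ (r + t) = ε

namespace TailEquiv

variable {x y z : ℝ} {δ ε : ℤˣ}

theorem refl (x : ℝ) : TailEquiv 1 x x := ⟨0, 0, rfl, pow_zero _⟩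

theorem symm : TailEquiv ε x y → TailEquiv ε y x :=
  fun ⟨r, t, h, hε⟩ => ⟨t, r, h.symm, Nat.add_comm r t ▸ hε⟩

theorem trans : TailEquiv δ x y → TailEquiv ε y z → TailEquiv (δ * ε) x z := by
  rintro ⟨r, t, hxy, rfl⟩ ⟨t', u, hyz, rfl⟩
  refine ⟨r + t', u + t, ?_, by rw [← pow_add]; congr 1; omega⟩
  rw [gaussIter_add, hxy, ← gaussIter_add, Nat.add_comm t t', gaussIter_add, hyz, ← gaussIter_add]

theorem congr_right (hyz : TailEquiv ε y z) : TailEquiv δ x y ↔ TailEquiv (δ * ε) x z :=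
  ⟨fun h => h.trans hyz, fun h => by
    simpa [mul_assoc, Int.units_mul_self] using h.trans hyz.symm⟩

theorem exists_iff : (∃ ε, TailEquiv ε x y) ↔ TailEquiv 1 x y ∨ TailEquiv (-1) x y := by
  constructor
  · rintro ⟨ε, h⟩
    rcases Int.units_eq_one_or ε with rfl | rfl
    exacts [.inl h, .inr h]
  · rintro (h | h) <;> exact ⟨_, h⟩

theorem exists_congr (hxz : TailEquiv δ x z) {w : ℝ} (hyw : TailEquiv ε y w) :
    (∃ η, TailEquiv η x y) ↔ ∃ η, TailEquiv η z w :=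
  ⟨fun ⟨_, h⟩ => ⟨_, (hxz.symm.trans h).trans hyw⟩,
    fun ⟨_, h⟩ => ⟨_, (hxz.trans h).trans hyw.symm⟩⟩

theorem gaussIter_right (x : ℝ) (n : ℕ) : TailEquiv ((-1) ^ n) x (gaussIter x n) :=
  ⟨n, 0, rfl, rfl⟩

theorem add_intCast (x : ℝ) (q : ℤ) : TailEquiv 1 x (x + q) :=
  ⟨1, 1, (gaussIter_one_add_intCast x q).symm, by decide⟩

theorem inv_of_pos (hx : Irrational x) (hpos : 0 < x) : TailEquiv (-1) x x⁻¹ := by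
  rcases (by simpa using hx.ne_nat 1 : x ≠ 1).lt_or_gt with hlt | hgt
  · exact ⟨1, 0, gaussIter_one_of_one_lt_inv ((one_lt_inv₀ hpos).mpr hlt), by decide⟩
  · exact ⟨0, 1, (gaussIter_one_inv hgt).symm, by decide⟩

/- With `u = x⁻¹ > 2`, the expansion of `x` continues with that of `u`, whereas
`1 - x = [0; 1, u - 1]`, and `u` and `u - 1` differ only in their integer parts. -/
theorem one_sub_of_lt_half (hpos : 0 < x) (hlt : x < 1 / 2) : TailEquiv (-1) x (1 - x) := by
  have hu : 2 < x⁻¹ := by rw [lt_inv_comm₀ two_pos hpos]; linarith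
  have hexpand : 1 - x = (((1 : ℤ) : ℝ) + (x⁻¹ - 1)⁻¹)⁻¹ := by
    have : 1 - x ≠ 0 := by linarith
    have : x⁻¹ - 1 ≠ 0 := by linarith
    field_simp
    push_cast
    ring
  have hgt : 1 < ((1 : ℤ) : ℝ) + (x⁻¹ - 1)⁻¹ := by
    have : 0 < (x⁻¹ - 1)⁻¹ := inv_pos.mpr (by linarith)
    push_cast
    linarith
  have htwo : gaussIter (1 - x) 2 = x⁻¹ - 1 := by
    rw [show 2 = 1 + 1 from rfl, gaussIter_add, hexpand, gaussIter_one_inv hgt,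
      gaussIter_one_intCast_add_inv (by linarith)]
  have hone : TailEquiv (-1) x x⁻¹ :=
    ⟨1, 0, gaussIter_one_of_one_lt_inv (by linarith), by decide⟩
  have hshift : TailEquiv 1 x⁻¹ (x⁻¹ - 1) := by
    simpa [sub_eq_add_neg] using add_intCast x⁻¹ (-1)
  simpa using (hone.trans hshift).trans (htwo ▸ gaussIter_right (1 - x) 2).symm

theorem one_sub_of_mem_Ioo (hx : Irrational x) (hmem : x ∈ Set.Ioo 0 1) :
    TailEquiv (-1) x (1 - x) := by
  have hne : x ≠ 1 / 2 := by simpa using hx.ne_rat (1 / 2)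
  rcases hne.lt_or_gt with hlt | hgt
  · exact one_sub_of_lt_half hmem.1 hlt
  · simpa using (one_sub_of_lt_half (x := 1 - x) (by linarith [hmem.2]) (by linarith)).symm

theorem neg (hx : Irrational x) : TailEquiv (-1) x (-x) := by
  have hfract : Irrational (Int.fract x) := hx.sub_intCast _
  have hmem : Int.fract x ∈ Set.Ioo 0 1 :=
    ⟨(Int.fract_nonneg x).lt_of_ne' hfract.ne_zero, Int.fract_lt_one x⟩
  have hleft : TailEquiv 1 x (Int.fract x) := by
    simpa [Int.fract, sub_eq_add_neg] using add_intCast x (-⌊x⌋)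
  have hright : TailEquiv 1 (-x) (1 - Int.fract x) := by
    convert add_intCast (-x) (1 + ⌊x⌋) using 1
    rw [Int.fract]
    push_cast
    ring
  simpa using (hleft.trans (one_sub_of_mem_Ioo hfract hmem)).trans hright.symm

theorem inv (hx : Irrational x) : TailEquiv (-1) x x⁻¹ := by
  rcases hx.ne_zero.lt_or_gt with hlt | hgt
  · simpa using ((neg hx).trans (inv_of_pos hx.neg (by linarith))).trans (neg hx.neg.inv)
  · exact inv_of_pos hx hgt

theorem neg_inv (hx : Irrational x) : TailEquiv 1 x (-x⁻¹) := by
  simpa using (inv hx).trans (neg hx.inv)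

end TailEquiv

end TailEquiv

section Moebius

open Matrix
open scoped MatrixGroups

theorem eq_zero_of_irrational_mul_add {x : ℝ} (hx : Irrational x) {p q : ℚ}
    (h : p * x + q = 0) : p = 0 ∧ q = 0 := by
  have hp : p = 0 := by
    by_contra hp
    have hirr : Irrational (p * x + q) := (hx.ratCast_mul hp).add_ratCast q
    exact hirr.ne_zero h
  subst hp
  exact ⟨rfl, by simpa using h⟩

/-- The action of an integer matrix on the real line by linear fractional transformations;
the value at a pole is `0`. -/
noncomputable def moebius (g : Matrix (Fin 2) (Fin 2) ℤ) (x : ℝ) : ℝ :=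
  (g 0 0 * x + g 0 1) / (g 1 0 * x + g 1 1)

variable {g h : Matrix (Fin 2) (Fin 2) ℤ} {x : ℝ}

theorem moebius_denom_ne_zero (hg : g.det ≠ 0) (hx : Irrational x) :
    (g 1 0 * x + g 1 1 : ℝ) ≠ 0 := by
  intro h
  have hrow := eq_zero_of_irrational_mul_add (p := g 1 0) (q := g 1 1) hx (by exact_mod_cast h)
  apply hg
  rw [det_fin_two, Int.cast_eq_zero.mp hrow.1, Int.cast_eq_zero.mp hrow.2]
  ring

theorem moebius_mul (g : Matrix (Fin 2) (Fin 2) ℤ) (hh : h.det ≠ 0) (hx : Irrational x) :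
    moebius (g * h) x = moebius g (moebius h x) := by
  have hd := moebius_denom_ne_zero hh hx
  simp only [moebius, mul_apply, Fin.sum_univ_two, Int.cast_add, Int.cast_mul]
  rw [mul_div_assoc', mul_div_assoc', div_add' _ _ _ hd, div_add' _ _ _ hd,
    div_div_div_cancel_right₀ hd]
  ring_nf

theorem moebius_intCast_smul_one {d : ℤ} (hd : d ≠ 0) (x : ℝ) : moebius (d • 1) x = x := by
  have : (d : ℝ) ≠ 0 := by exact_mod_cast hd
  simp [moebius, this]

theorem moebius_one (x : ℝ) : moebius 1 x = x := by
  simpa using moebius_intCast_smul_one one_ne_zero x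

theorem moebius_adjugate_moebius (hg : g.det ≠ 0) (hx : Irrational x) :
    moebius g.adjugate (moebius g x) = x := by
  rw [← moebius_mul _ hg hx, adjugate_mul, moebius_intCast_smul_one hg]

theorem moebius_injOn_irrational (hg : g.det ≠ 0) : Set.InjOn (moebius g) {x | Irrational x} :=
  fun x hx y hy hxy => by
    rw [← moebius_adjugate_moebius hg hx, hxy, moebius_adjugate_moebius hg hy]

theorem irrational_moebius (hg : g.det ≠ 0) (hx : Irrational x) : Irrational (moebius g x) := by
  rintro ⟨q, hq⟩
  refine hx ⟨(g.adjugate 0 0 * q + g.adjugate 0 1) / (g.adjugate 1 0 * q + g.adjugate 1 1), ?_⟩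
  have := moebius_adjugate_moebius hg hx
  rw [← hq, moebius] at this
  push_cast
  exact this

theorem moebius_moebius_adjugate (hg : g.det ≠ 0) (hx : Irrational x) :
    moebius g (moebius g.adjugate x) = x := by
  have hadj : g.adjugate.det ≠ 0 := by simpa [det_adjugate] using hg
  rw [← moebius_mul _ hadj hx, mul_adjugate, moebius_intCast_smul_one hg]

theorem tailEquiv_moebius_SL2 (g : SL(2, ℤ)) (hx : Irrational x) :
    TailEquiv 1 (moebius g x) x := by
  have hdet (g : SL(2, ℤ)) : (g : Matrix (Fin 2) (Fin 2) ℤ).det ≠ 0 := by simp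
  have hg : g ∈ Subgroup.closure {ModularGroup.S, ModularGroup.T} := by
    rw [SpecialLinearGroup.SL2Z_generators]
    trivial
  induction hg using Subgroup.closure_induction generalizing x with
  | mem g hg =>
    rcases hg with rfl | rfl
    · have hS : moebius ModularGroup.S x = -x⁻¹ := by
        simp [moebius, ModularGroup.coe_S, neg_div]
      exact hS ▸ (TailEquiv.neg_inv hx).symm
    · have hT : moebius ModularGroup.T x = x + (1 : ℤ) := by
        simp [moebius, ModularGroup.coe_T]
      exact hT ▸ (TailEquiv.add_intCast x 1).symm
  | one => simpa [moebius_one] using TailEquiv.refl x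
  | mul g h _ _ ihg ihh =>
    have hmul : moebius (g * h : SL(2, ℤ)) x = moebius g (moebius h x) := moebius_mul g (hdet h) hx
    exact hmul ▸ (ihg (irrational_moebius (hdet h) hx)).trans (ihh hx)
  | inv g _ ih =>
    have hinv : Irrational (moebius (g⁻¹ : SL(2, ℤ)) x) := irrational_moebius (hdet _) hx
    have hcancel : moebius g (moebius (g⁻¹ : SL(2, ℤ)) x) = x :=
      moebius_moebius_adjugate (hdet g) hx
    exact (hcancel ▸ ih hinv).symm

theorem tailEquiv_moebius {ε : ℤˣ} (hg : g.det = ε) (hx : Irrational x) :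
    TailEquiv ε (moebius g x) x := by
  rcases Int.units_eq_one_or ε with rfl | rfl
  · exact tailEquiv_moebius_SL2 ⟨g, hg⟩ hx
  · have hdet : (!![-1, 0; 0, 1] * g).det = 1 := by rw [det_mul, hg]; simp
    have hirr : Irrational (moebius g x) := irrational_moebius (by simp [hg]) hx
    have hneg : moebius (!![-1, 0; 0, 1] * g) x = -moebius g x := by
      rw [moebius_mul _ (by simp [hg]) hx]
      simp [moebius]
    have := tailEquiv_moebius_SL2 ⟨_, hdet⟩ hx
    simpa using (TailEquiv.neg hirr).trans (hneg ▸ this)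

end Moebius

section CFMatrix

open Matrix

/-- The matrix of the map `z ↦ [a₀; a₁, …, aₙ₋₁, z]` attached to the word `s = [a₀, …, aₙ₋₁]`. -/
def cfMatrix (s : List ℤ) : Matrix (Fin 2) (Fin 2) ℤ := (s.map fun a => !![a, 1; 1, 0]).prod

theorem cfMatrix_nil : cfMatrix [] = 1 := rfl

theorem cfMatrix_cons (a : ℤ) (s : List ℤ) :
    cfMatrix (a :: s) = !![a, 1; 1, 0] * cfMatrix s := rfl

theorem cfMatrix_append (s t : List ℤ) : cfMatrix (s ++ t) = cfMatrix s * cfMatrix t := by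
  simp only [cfMatrix, List.map_append, List.prod_append]

theorem det_cfMatrix (s : List ℤ) : (cfMatrix s).det = ((-1) ^ s.length : ℤˣ) := by
  induction s with
  | nil => simp [cfMatrix_nil]
  | cons a s ih => rw [cfMatrix_cons, det_mul, ih]; simp [pow_succ]

theorem det_cfMatrix_ne_zero (s : List ℤ) : (cfMatrix s).det ≠ 0 :=
  det_cfMatrix s ▸ Units.ne_zero _

theorem cfMatrix_reverse (s : List ℤ) : cfMatrix s.reverse = (cfMatrix s)ᵀ := by
  have hsymm (a : ℤ) : !![a, 1; 1, 0]ᵀ = !![a, 1; 1, 0] := by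
    simp [← Matrix.ext_iff, Fin.forall_fin_two]
  induction s with
  | nil => simp [cfMatrix_nil]
  | cons a s ih =>
    rw [List.reverse_cons, cfMatrix_append, ih, cfMatrix_cons, cfMatrix_cons, cfMatrix_nil, mul_one,
      transpose_mul, hsymm]

variable {s : List ℤ} {x y z : ℝ} {ε : ℤˣ}

theorem moebius_digit (a : ℤ) (hz : z ≠ 0) : moebius !![a, 1; 1, 0] z = a + z⁻¹ := by
  simp [moebius, field]

theorem moebius_cfMatrix_cons (a : ℤ) (s : List ℤ) (hz : Irrational z) :
    moebius (cfMatrix (a :: s)) z = a + (moebius (cfMatrix s) z)⁻¹ := by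
  rw [cfMatrix_cons, moebius_mul _ (det_cfMatrix_ne_zero s) hz,
    moebius_digit _ (irrational_moebius (det_cfMatrix_ne_zero s) hz).ne_zero]

theorem moebius_cfMatrix_gaussIter (hx : Irrational x) (n : ℕ) :
    moebius (cfMatrix ((List.range n).map (cfTerm x))) (gaussIter x n) = x := by
  induction n with
  | zero => exact moebius_one x
  | succ n ih =>
    have hirr := irrational_gaussIter hx (n + 1)
    rw [List.range_succ, List.map_append, List.map_singleton, cfMatrix_append,
      moebius_mul _ (det_cfMatrix_ne_zero _) hirr, cfMatrix_cons, cfMatrix_nil, mul_one,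
      moebius_digit _ hirr.ne_zero, cfTerm_add_inv_gaussIter, ih]

theorem moebius_adjugate_cfMatrix (hx : Irrational x) (n : ℕ) :
    moebius (cfMatrix ((List.range n).map (cfTerm x))).adjugate x = gaussIter x n := by
  simpa only [moebius_cfMatrix_gaussIter hx] using
    moebius_adjugate_moebius (det_cfMatrix_ne_zero ((List.range n).map (cfTerm x)))
      (irrational_gaussIter hx n)

theorem tailEquiv_iff_exists_moebius (hx : Irrational x) (hy : Irrational y) :
    TailEquiv ε x y ↔ ∃ g : Matrix (Fin 2) (Fin 2) ℤ, g.det = ε ∧ moebius g y = x := by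
  refine ⟨?_, fun ⟨g, hdet, hg⟩ => hg ▸ tailEquiv_moebius hdet hy⟩
  rintro ⟨r, t, h, rfl⟩
  set P := cfMatrix ((List.range r).map (cfTerm x))
  set Q := cfMatrix ((List.range t).map (cfTerm y))
  have hQ : Q.adjugate.det ≠ 0 := by simpa [det_adjugate] using det_cfMatrix_ne_zero _
  refine ⟨P * Q.adjugate, by simp [P, Q, det_adjugate, det_cfMatrix, pow_add], ?_⟩
  rw [moebius_mul _ hQ hy, moebius_adjugate_cfMatrix hy, ← h, moebius_cfMatrix_gaussIter hx]

theorem moebius_cfMatrix_pos (hs : ∀ a ∈ s, 1 ≤ a) (hz : Irrational z) (hpos : 0 < z) :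
    0 < moebius (cfMatrix s) z := by
  induction s with
  | nil => rwa [cfMatrix_nil, moebius_one]
  | cons a s ih =>
    rw [List.forall_mem_cons] at hs
    have ha : (1 : ℝ) ≤ a := by exact_mod_cast hs.1
    rw [moebius_cfMatrix_cons a s hz]
    linarith [inv_pos.mpr (ih hs.2)]

theorem one_lt_moebius_cfMatrix (hne : s ≠ []) (hs : ∀ a ∈ s, 1 ≤ a) (hz : Irrational z)
    (hpos : 0 < z) : 1 < moebius (cfMatrix s) z := by
  obtain ⟨a, s, rfl⟩ := List.exists_cons_of_ne_nil hne
  rw [List.forall_mem_cons] at hs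
  have ha : (1 : ℝ) ≤ a := by exact_mod_cast hs.1
  rw [moebius_cfMatrix_cons a s hz]
  linarith [inv_pos.mpr (moebius_cfMatrix_pos hs.2 hz hpos)]

theorem one_lt_moebius_cfMatrix_of_one_lt (hs : ∀ a ∈ s, 1 ≤ a) (hz : Irrational z) (hz1 : 1 < z) :
    1 < moebius (cfMatrix s) z := by
  rcases eq_or_ne s [] with rfl | hne
  · rwa [cfMatrix_nil, moebius_one]
  · exact one_lt_moebius_cfMatrix hne hs hz (by linarith)

theorem gaussIter_moebius_cfMatrix (hs : ∀ a ∈ s, 1 ≤ a) (hz : Irrational z) (hz1 : 1 < z) :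
    gaussIter (moebius (cfMatrix s) z) s.length = z := by
  induction s with
  | nil => exact moebius_one z
  | cons a s ih =>
    rw [List.forall_mem_cons] at hs
    rw [List.length_cons, Nat.add_comm, gaussIter_add, moebius_cfMatrix_cons a s hz,
      gaussIter_one_intCast_add_inv (one_lt_moebius_cfMatrix_of_one_lt hs.2 hz hz1), ih hs.2]

theorem cfTerm_moebius_cfMatrix (hs : ∀ a ∈ s, 1 ≤ a) (hz : Irrational z) (hz1 : 1 < z)
    {j : ℕ} (hj : j < s.length) : cfTerm (moebius (cfMatrix s) z) j = s[j] := by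
  induction s generalizing j with
  | nil => exact absurd hj (Nat.not_lt_zero j)
  | cons a s ih =>
    rw [List.forall_mem_cons] at hs
    have htail := one_lt_moebius_cfMatrix_of_one_lt hs.2 hz hz1
    rw [moebius_cfMatrix_cons a s hz]
    cases j with
    | zero => exact floor_intCast_add_inv htail a
    | succ j =>
      rw [List.getElem_cons_succ, Nat.add_comm, ← cfTerm_gaussIter,
        gaussIter_one_intCast_add_inv htail]
      exact ih hs.2 (Nat.lt_of_succ_lt_succ hj)

end CFMatrix

section Periodic

/-- The expansion of `x` is purely periodic and obtained by repeating the word `s`, which need not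
be the shortest possible one. -/
def CFRepeats (s : List ℤ) (x : ℝ) : Prop := ∀ j, cfTerm x j = s.getD (j % s.length) 0

variable {s t : List ℤ} {x y : ℝ}

namespace CFRepeats

theorem cfTerm_eq_getElem (h : CFRepeats s x) {j : ℕ} (hj : j < s.length) : cfTerm x j = s[j] := by
  rw [h, Nat.mod_eq_of_lt hj, List.getD_eq_getElem]

theorem cfTerm_length_add (h : CFRepeats s x) (j : ℕ) : cfTerm x (s.length + j) = cfTerm x j := by
  rw [h, h, Nat.add_mod_left]

theorem eq_map_cfTerm (h : CFRepeats s x) : (List.range s.length).map (cfTerm x) = s :=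
  List.ext_getElem (by simp) fun j _ hj => by simpa using h.cfTerm_eq_getElem hj

theorem word_unique (hs : CFRepeats s x) (ht : CFRepeats t x) (hlen : s.length = t.length) :
    s = t := by
  rw [← hs.eq_map_cfTerm, hlen, ht.eq_map_cfTerm]

theorem real_unique (hx : CFRepeats s x) (hy : CFRepeats s y) (hx' : Irrational x)
    (hy' : Irrational y) : x = y :=
  eq_of_cfTerm_eq hx' hy' fun n => (hx n).trans (hy n).symm

theorem one_le (h : CFRepeats s x) (hx : Irrational x) : ∀ a ∈ s, 1 ≤ a := by
  intro a ha
  obtain ⟨j, hj, rfl⟩ := List.getElem_of_mem ha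
  rw [← h.cfTerm_eq_getElem hj, ← h.cfTerm_length_add]
  exact one_le_cfTerm hx (by omega)

theorem gaussIter_length (h : CFRepeats s x) (hx : Irrational x) : gaussIter x s.length = x :=
  eq_of_cfTerm_eq (irrational_gaussIter hx _) hx fun n => by
    rw [cfTerm_gaussIter, h.cfTerm_length_add]

theorem moebius_cfMatrix_eq (h : CFRepeats s x) (hx : Irrational x) :
    moebius (cfMatrix s) x = x := by
  simpa only [h.eq_map_cfTerm, h.gaussIter_length hx] using
    moebius_cfMatrix_gaussIter hx s.length

theorem of_moebius_cfMatrix_eq (hne : s ≠ []) (hs : ∀ a ∈ s, 1 ≤ a) (hx : Irrational x)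
    (hpos : 0 < x) (hfix : moebius (cfMatrix s) x = x) : CFRepeats s x := by
  have hx1 : 1 < x := hfix ▸ one_lt_moebius_cfMatrix hne hs hx hpos
  have hiter : gaussIter x s.length = x := by
    simpa only [hfix] using gaussIter_moebius_cfMatrix hs hx hx1
  have hper : Function.Periodic (cfTerm x) s.length := fun n => by
    rw [Nat.add_comm, ← cfTerm_gaussIter, hiter]
  intro j
  have hj : j % s.length < s.length := Nat.mod_lt j (List.length_pos_iff.mpr hne)
  rw [← hper.map_mod_nat, List.getD_eq_getElem _ _ hj]
  simpa only [hfix] using cfTerm_moebius_cfMatrix hs hx hx1 hj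

theorem rotate (h : CFRepeats s x) (hne : s ≠ []) (r : ℕ) :
    CFRepeats (s.rotate r) (gaussIter x r) := by
  intro j
  have hj : j % s.length < s.length := Nat.mod_lt j (List.length_pos_iff.mpr hne)
  rw [cfTerm_gaussIter, h, List.length_rotate, List.getD_eq_getElem?_getD,
    List.getD_eq_getElem?_getD, List.getElem?_rotate hj, Nat.mod_add_mod, Nat.add_comm]

theorem exists_tailEquiv_iff_isRotated (hx : CFRepeats s x) (hy : CFRepeats t y)
    (hx' : Irrational x) (hy' : Irrational y) (hlen : s.length = t.length) (hne : s ≠ []) :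
    (∃ ε, TailEquiv ε x y) ↔ s ~r t := by
  have hne' : t ≠ [] := by rwa [ne_eq, ← List.length_eq_zero_iff, ← hlen, List.length_eq_zero_iff]
  constructor
  · rintro ⟨_, r, r', h, -⟩
    have hrot : s.rotate r = t.rotate r' :=
      (hx.rotate hne r).word_unique (h ▸ hy.rotate hne' r') (by simpa using hlen)
    exact (List.IsRotated.forall s r).symm.trans (hrot ▸ List.IsRotated.forall t r')
  · rintro ⟨r, rfl⟩
    have heq : gaussIter x r = y :=
      (hx.rotate hne r).real_unique hy (irrational_gaussIter hx' r) hy'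
    exact ⟨_, heq ▸ TailEquiv.gaussIter_right x r⟩

end CFRepeats

namespace IsCFPeriod

theorem exists_cfRepeats (hs : IsCFPeriod s x) : ∃ N, CFRepeats s (gaussIter x N) :=
  hs.2.1.imp fun N hN j => (cfTerm_gaussIter x N j).trans (hN j)

theorem length_dvd (hs : IsCFPeriod s x) (hx : Irrational x) {r q : ℕ}
    (h : gaussIter x (r + q) = gaussIter x r) : s.length ∣ q := by
  obtain ⟨N, hN⟩ := hs.exists_cfRepeats
  have hper : Function.Periodic (fun n => gaussIter x (N + r + n)) s.length := fun n => by
    have hloop := hN.gaussIter_length (irrational_gaussIter hx N)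
    rw [← gaussIter_add] at hloop
    change gaussIter x (N + r + (n + s.length)) = gaussIter x (N + r + n)
    rw [show N + r + (n + s.length) = N + s.length + (r + n) by omega, gaussIter_add, hloop,
      ← gaussIter_add, Nat.add_assoc]
  have hq : gaussIter x (N + r + q % s.length) = gaussIter x (N + r) := by
    rw [hper.map_mod_nat q, Nat.add_assoc, Nat.add_comm, gaussIter_add, h, ← gaussIter_add,
      Nat.add_comm]
  refine Nat.dvd_of_mod_eq_zero (by_contra fun hmod => ?_)
  have hle : s.length ≤ q % s.length := hs.2.2 _ (Nat.pos_of_ne_zero hmod)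
    ⟨N + r, Nat.pos_of_ne_zero hmod, fun j => by
      rw [Nat.add_right_comm, ← cfTerm_gaussIter, hq, cfTerm_gaussIter]⟩
  exact hle.not_gt (Nat.mod_lt q (List.length_pos_iff.mpr hs.1))

theorem odd_length_iff (hs : IsCFPeriod s x) (hx : Irrational x) :
    Odd s.length ↔ TailEquiv (-1) x x := by
  constructor
  · intro hodd
    obtain ⟨N, hN⟩ := hs.exists_cfRepeats
    refine ⟨N + s.length, N, ?_, Odd.neg_one_pow (by grind)⟩
    rw [gaussIter_add, hN.gaussIter_length (irrational_gaussIter hx N)]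
  · rintro ⟨r, t, h, hsign⟩
    have hodd : Odd (r + t) := by
      rw [← Nat.not_even_iff_odd, ← neg_one_pow_eq_one_iff_even (R := ℤˣ) (by decide), hsign]
      decide
    wlog hle : t ≤ r generalizing r t
    · exact this t r h.symm (Nat.add_comm r t ▸ hsign) (Nat.add_comm r t ▸ hodd) (by omega)
    obtain ⟨q, rfl⟩ := Nat.exists_eq_add_of_le hle
    exact Odd.of_dvd_nat (by grind : Odd q) (hs.length_dvd hx h)

end IsCFPeriod

end Periodic

section QuadraticConj

open Matrix

/-- `x` and `y` are the two roots of an irreducible quadratic polynomial over `ℚ`, the condition on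
the coefficients being expressed through Vieta's formulas. -/
structure IsQuadraticConj (x y : ℝ) : Prop where
  irrational_left : Irrational x
  irrational_right : Irrational y
  ne : x ≠ y
  sum : ∃ S : ℚ, x + y = S
  prod : ∃ P : ℚ, x * y = P

namespace IsQuadraticConj

variable {g : Matrix (Fin 2) (Fin 2) ℤ} {s : List ℤ} {x y : ℝ}

theorem map_moebius (h : IsQuadraticConj x y) (hg : g.det ≠ 0) :
    IsQuadraticConj (moebius g x) (moebius g y) where
  irrational_left := irrational_moebius hg h.irrational_left
  irrational_right := irrational_moebius hg h.irrational_right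
  ne heq := h.ne (moebius_injOn_irrational hg h.irrational_left h.irrational_right heq)
  sum := by
    obtain ⟨⟨S, hS⟩, P, hP⟩ := h.sum, h.prod
    have hx := moebius_denom_ne_zero hg h.irrational_left
    have hy := moebius_denom_ne_zero hg h.irrational_right
    refine ⟨(2 * g 0 0 * g 1 0 * P + (g 0 0 * g 1 1 + g 0 1 * g 1 0) * S + 2 * g 0 1 * g 1 1) /
      (g 1 0 ^ 2 * P + g 1 0 * g 1 1 * S + g 1 1 ^ 2), ?_⟩
    push_cast
    rw [← hS, ← hP, moebius, moebius, div_add_div _ _ hx hy]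
    ring_nf
  prod := by
    obtain ⟨⟨S, hS⟩, P, hP⟩ := h.sum, h.prod
    refine ⟨(g 0 0 ^ 2 * P + g 0 0 * g 0 1 * S + g 0 1 ^ 2) /
      (g 1 0 ^ 2 * P + g 1 0 * g 1 1 * S + g 1 1 ^ 2), ?_⟩
    push_cast
    rw [← hS, ← hP, moebius, moebius, div_mul_div_comm]
    ring_nf

theorem moebius_eq_right (h : IsQuadraticConj x y) (hg : g.det ≠ 0)
    (hfix : moebius g x = x) : moebius g y = y := by
  obtain ⟨⟨S, hS⟩, P, hP⟩ := h.sum, h.prod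
  have hquad : g 1 0 * x ^ 2 + (g 1 1 - g 0 0) * x - g 0 1 = 0 := by
    rw [moebius, div_eq_iff (moebius_denom_ne_zero hg h.irrational_left)] at hfix
    linear_combination -hfix
  obtain ⟨hlin, hconst⟩ := eq_zero_of_irrational_mul_add h.irrational_left
    (p := g 1 0 * S + g 1 1 - g 0 0) (q := -g 1 0 * P - g 0 1) (by
      push_cast
      linear_combination hquad - g 1 0 * x * hS + g 1 0 * hP)
  have hlin' : (g 1 0 * S + g 1 1 - g 0 0 : ℝ) = 0 := by exact_mod_cast hlin
  have hconst' : (-g 1 0 * P - g 0 1 : ℝ) = 0 := by exact_mod_cast hconst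
  rw [moebius, div_eq_iff (moebius_denom_ne_zero hg h.irrational_right)]
  linear_combination -hconst' - y * hlin' - g 1 0 * y * hS + g 1 0 * hP

end IsQuadraticConj

theorem moebius_transpose_neg_inv {g : Matrix (Fin 2) (Fin 2) ℤ} {y : ℝ} (hg : g.det ≠ 0)
    (hy : Irrational y) (hfix : moebius g y = y) : moebius gᵀ (-y⁻¹) = -y⁻¹ := by
  have hy0 := hy.ne_zero
  have hden : (gᵀ 1 0 * (-y⁻¹) + gᵀ 1 1 : ℝ) ≠ 0 :=
    moebius_denom_ne_zero (by rwa [det_transpose]) hy.inv.neg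
  rw [moebius, div_eq_iff (moebius_denom_ne_zero hg hy)] at hfix
  rw [moebius, div_eq_iff hden]
  simp only [transpose_apply]
  field_simp
  linear_combination -hfix

variable {s : List ℤ} {x y : ℝ}

/- The conjugate `y` is the other fixed point of the period matrix. If it were positive it would
have the same expansion as `x`; hence `-y⁻¹` is a positive fixed point of the transposed matrix,
which is the matrix of the reversed word. -/
theorem CFRepeats.reverse (hx : CFRepeats s x) (hne : s ≠ []) (h : IsQuadraticConj x y) :
    CFRepeats s.reverse (-y⁻¹) := by
  have hs := hx.one_le h.irrational_left
  have hdet := det_cfMatrix_ne_zero s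
  have hfix : moebius (cfMatrix s) y = y :=
    h.moebius_eq_right hdet (hx.moebius_cfMatrix_eq h.irrational_left)
  have hneg : y < 0 := by
    by_contra hnonneg
    have hpos : 0 < y := (not_lt.mp hnonneg).lt_of_ne' h.irrational_right.ne_zero
    have hy : CFRepeats s y := .of_moebius_cfMatrix_eq hne hs h.irrational_right hpos hfix
    exact h.ne (hx.real_unique hy h.irrational_left h.irrational_right)
  refine .of_moebius_cfMatrix_eq (by simpa using hne) (by simpa using hs)
    h.irrational_right.inv.neg (neg_pos.mpr (inv_lt_zero.mpr hneg)) ?_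
  rw [cfMatrix_reverse]
  exact moebius_transpose_neg_inv hdet h.irrational_right hfix

theorem IsCFPeriod.exists_tailEquiv_iff_isRotated_reverse (hs : IsCFPeriod s x)
    (h : IsQuadraticConj x y) : (∃ ε, TailEquiv ε x y) ↔ s ~r s.reverse := by
  obtain ⟨N, hN⟩ := hs.exists_cfRepeats
  have hx := h.irrational_left
  set initialWord := (List.range N).map (cfTerm x)
  have hdet : (cfMatrix initialWord).adjugate.det ≠ 0 := by
    simpa [det_adjugate] using det_cfMatrix_ne_zero initialWord
  have htail : moebius (cfMatrix initialWord).adjugate x = gaussIter x N :=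
    moebius_adjugate_cfMatrix hx N
  have hconj := h.map_moebius hdet
  rw [htail] at hconj
  have hy : TailEquiv ((-1) ^ initialWord.length) y (moebius (cfMatrix initialWord).adjugate y) :=
    (tailEquiv_moebius (by simp [det_adjugate, det_cfMatrix]) h.irrational_right).symm
  rw [TailEquiv.exists_congr (TailEquiv.gaussIter_right x N)
    (hy.trans (TailEquiv.neg_inv hconj.irrational_right))]
  exact hN.exists_tailEquiv_iff_isRotated (hN.reverse hs.1 hconj) hconj.irrational_left
    hconj.irrational_right.inv.neg (List.length_reverse).symm hs.1

end QuadraticConj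

section Palindromes

theorem exists_eq_append_reverse {α : Type*} {l : List α} (hl : l.reverse = l)
    (heven : Even l.length) : ∃ u : List α, l = u ++ u.reverse := by
  obtain ⟨k, hk⟩ := heven
  refine ⟨l.take k, ?_⟩
  have hsplit : (l.drop k).reverse ++ (l.take k).reverse = l.take k ++ l.drop k := by
    rw [← List.reverse_append, List.take_append_drop, hl]
  have hhalves := List.append_inj hsplit (by simp; omega)
  rw [hhalves.2, List.take_append_drop]

theorem palindromic_append_of_even {u v : List ℤ} (hu : u.reverse = u) (hv : v.reverse = v)
    (heven : Even u.length) : Palindromic (u ++ v) := by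
  obtain ⟨w, rfl⟩ := exists_eq_append_reverse hu heven
  refine ⟨w.reverse ++ v ++ w, ?_, by simp [hv]⟩
  simpa using List.isRotated_append (l := w) (l' := w.reverse ++ v)

theorem palindromic_or_bipalindromic_append {u v : List ℤ} (hu : u.reverse = u)
    (hv : v.reverse = v) : Palindromic (u ++ v) ∨ Bipalindromic (u ++ v) := by
  rcases Nat.even_or_odd u.length with hu' | hu'
  · exact .inl (palindromic_append_of_even hu hv hu')
  rcases Nat.even_or_odd v.length with hv' | hv'
  · obtain ⟨t, hrot, ht⟩ := palindromic_append_of_even hv hu hv'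
    exact .inl ⟨t, List.isRotated_append.trans hrot, ht⟩
  · exact .inr ⟨u, v, .refl _, hu', hv', hu, hv⟩

theorem palindromic_or_bipalindromic_iff_isRotated_reverse {s : List ℤ} :
    Palindromic s ∨ Bipalindromic s ↔ s ~r s.reverse := by
  constructor
  · rintro (⟨t, hrot, ht⟩ | ⟨u, v, hrot, -, -, hu, hv⟩)
    · exact hrot.trans (ht ▸ hrot.reverse).symm
    · have hrev : s.reverse ~r v ++ u := by simpa [hu, hv] using hrot.reverse
      exact (hrot.trans List.isRotated_append).trans hrev.symm
  · intro h
    obtain ⟨r, hr, hrot⟩ := List.isRotated_iff_mod.mp h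
    have hsplit : s.drop r ++ s.take r = (s.drop r).reverse ++ (s.take r).reverse := by
      rw [← List.reverse_append, List.take_append_drop, ← hrot, List.rotate_eq_drop_append_take hr]
    obtain ⟨hdrop, htake⟩ := List.append_inj hsplit (List.length_reverse).symm
    simpa only [List.take_append_drop] using
      palindromic_or_bipalindromic_append htake.symm hdrop.symm

end Palindromes

section Forms

open Matrix

variable {f f' : ℤ × ℤ × ℤ} {M : Matrix (Fin 2) (Fin 2) ℤ} {z : ℝ}

/-- The form obtained from `f` by the change of variables with matrix `M`. -/
def formComp (f : ℤ × ℤ × ℤ) (M : Matrix (Fin 2) (Fin 2) ℤ) : ℤ × ℤ × ℤ :=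
  (qval f (M 0 0) (M 1 0), qval f (M 0 1) (M 1 1),
    2 * f.1 * M 0 0 * M 0 1 + 2 * f.2.1 * M 1 0 * M 1 1 +
      f.2.2 * (M 0 0 * M 1 1 + M 0 1 * M 1 0))

theorem qval_formComp (f : ℤ × ℤ × ℤ) (M : Matrix (Fin 2) (Fin 2) ℤ) (x y : ℤ) :
    qval (formComp f M) x y = qval f (M 0 0 * x + M 0 1 * y) (M 1 0 * x + M 1 1 * y) := by
  simp only [qval, formComp]
  ring

theorem formDisc_formComp (f : ℤ × ℤ × ℤ) (M : Matrix (Fin 2) (Fin 2) ℤ) :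
    formDisc (formComp f M) = M.det ^ 2 * formDisc f := by
  simp only [formDisc, formComp, qval, det_fin_two]
  ring

theorem eq_of_qval_eq (h : ∀ x y, qval f x y = qval f' x y) : f = f' := by
  have h10 := h 1 0
  have h01 := h 0 1
  have h11 := h 1 1
  simp only [qval] at h10 h01 h11
  ext <;> linarith

theorem slEquiv_iff_exists_formComp : SLEquiv f f' ↔ ∃ M, M.det = 1 ∧ f' = formComp f M := by
  constructor
  · rintro ⟨a, b, c, d, hdet, h⟩
    exact ⟨!![a, b; c, d], by rwa [det_fin_two_of],
      eq_of_qval_eq fun x y => (h x y).trans (qval_formComp f !![a, b; c, d] x y).symm⟩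
  · rintro ⟨M, hdet, rfl⟩
    exact ⟨M 0 0, M 0 1, M 1 0, M 1 1, by rwa [det_fin_two] at hdet, qval_formComp f M⟩

theorem fst_ne_zero_of_irrational (hf : Irrational √(formDisc f : ℝ)) : f.1 ≠ 0 := by
  intro h
  refine hf ⟨|f.2.2|, ?_⟩
  simp [formDisc, h, Real.sqrt_sq_eq_abs]

theorem xiPlus_eq_iff (hm : f.1 ≠ 0) : xiPlus f = z ↔ 2 * f.1 * z + f.2.2 = √(formDisc f : ℝ) := by
  rw [xiPlus, div_eq_iff (by simpa using hm)]
  constructor <;> intro h <;> linarith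

theorem two_mul_xiPlus_add (hf : Irrational √(formDisc f : ℝ)) :
    2 * f.1 * xiPlus f + f.2.2 = √(formDisc f : ℝ) :=
  (xiPlus_eq_iff (fst_ne_zero_of_irrational hf)).mp rfl

theorem sq_sqrt_formDisc (hf : Irrational √(formDisc f : ℝ)) :
    √(formDisc f : ℝ) ^ 2 = f.2.2 ^ 2 - 4 * f.1 * f.2.1 := by
  rw [Real.sq_sqrt (by exact_mod_cast (irrational_sqrt_intCast_iff.mp hf).2), formDisc]
  push_cast
  rfl

theorem xiPlus_add_xiMinus (f : ℤ × ℤ × ℤ) : xiPlus f + xiMinus f = -f.2.2 / f.1 := by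
  rw [xiPlus, xiMinus]
  ring

theorem xiPlus_mul_xiMinus (hf : Irrational √(formDisc f : ℝ)) :
    xiPlus f * xiMinus f = f.2.1 / f.1 := by
  have hm : (f.1 : ℝ) ≠ 0 := by exact_mod_cast fst_ne_zero_of_irrational hf
  rw [xiPlus, xiMinus]
  field_simp
  linear_combination -sq_sqrt_formDisc hf

theorem xiPlus_root (hf : Irrational √(formDisc f : ℝ)) :
    f.1 * xiPlus f ^ 2 + f.2.2 * xiPlus f + f.2.1 = 0 := by
  have hm : (f.1 : ℝ) ≠ 0 := by exact_mod_cast fst_ne_zero_of_irrational hf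
  have hsum := xiPlus_add_xiMinus f
  have hprod := xiPlus_mul_xiMinus hf
  field_simp at hsum hprod
  linear_combination xiPlus f * hsum - hprod

theorem irrational_xiPlus (hf : Irrational √(formDisc f : ℝ)) : Irrational (xiPlus f) := by
  have h := (hf.intCast_add (-f.2.2)).div_intCast
    (m := 2 * f.1) (by simpa using fst_ne_zero_of_irrational hf)
  simpa [xiPlus] using h

theorem isQuadraticConj_xiPlus_xiMinus (hf : Irrational √(formDisc f : ℝ)) :
    IsQuadraticConj (xiPlus f) (xiMinus f) where
  irrational_left := irrational_xiPlus hf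
  irrational_right := by
    rw [eq_sub_of_add_eq' (xiPlus_add_xiMinus f)]
    exact_mod_cast (irrational_xiPlus hf).ratCast_sub (-f.2.2 / f.1)
  ne heq := by
    rw [xiPlus, xiMinus, div_left_inj' (by simpa using fst_ne_zero_of_irrational hf)] at heq
    exact hf.ne_zero (by linarith)
  sum := ⟨-f.2.2 / f.1, by exact_mod_cast xiPlus_add_xiMinus f⟩
  prod := ⟨f.2.1 / f.1, by exact_mod_cast xiPlus_mul_xiMinus hf⟩

theorem eq_of_xiPlus_eq (hf : Irrational √(formDisc f : ℝ)) (hdisc : formDisc f' = formDisc f)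
    (hxi : xiPlus f' = xiPlus f) : f' = f := by
  have hroot := two_mul_xiPlus_add hf
  have hroot' := two_mul_xiPlus_add (f := f') (hdisc ▸ hf)
  rw [hdisc, hxi] at hroot'
  obtain ⟨hm, hk⟩ := eq_zero_of_irrational_mul_add (irrational_xiPlus hf)
    (p := 2 * f'.1 - 2 * f.1) (q := f'.2.2 - f.2.2) (by
      push_cast
      linear_combination hroot' - hroot)
  have hm' : f'.1 = f.1 := by
    have : (2 * f'.1 - 2 * f.1 : ℤ) = 0 := by exact_mod_cast hm
    linarith
  have hk' : f'.2.2 = f.2.2 := by exact_mod_cast sub_eq_zero.mp hk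
  have hn' : f'.2.1 = f.2.1 := by
    rw [formDisc, formDisc, hm', hk'] at hdisc
    exact mul_left_cancel₀ (fst_ne_zero_of_irrational hf) (by linarith)
  exact Prod.ext hm' (Prod.ext hn' hk')

theorem moebius_xiPlus_formComp (hf : Irrational √(formDisc f : ℝ)) (hM : M.det = 1) :
    moebius M (xiPlus (formComp f M)) = xiPlus f := by
  have hdisc : formDisc (formComp f M) = formDisc f := by simp [formDisc_formComp, hM]
  have hf' : Irrational √(formDisc (formComp f M) : ℝ) := hdisc ▸ hf
  have hden : (M 1 0 * xiPlus (formComp f M) + M 1 1 : ℝ) ≠ 0 :=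
    moebius_denom_ne_zero (by simp [hM]) (irrational_xiPlus hf')
  have hlin := two_mul_xiPlus_add hf'
  have hroot := xiPlus_root hf'
  have hdet : (M 0 0 * M 1 1 - M 0 1 * M 1 0 : ℝ) = 1 := by exact_mod_cast det_fin_two M ▸ hM
  rw [hdisc] at hlin
  rw [eq_comm, xiPlus_eq_iff (fst_ne_zero_of_irrational hf), ← hlin, moebius, mul_div_assoc',
    div_add' _ _ _ hden, div_eq_iff hden]
  generalize xiPlus (formComp f M) = z at hroot ⊢
  simp only [formComp, qval] at hroot ⊢
  push_cast at hroot ⊢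
  linear_combination -2 * M 1 0 * hroot - ((2 * f.1 * M 0 0 + f.2.2 * M 1 0) * z +
    (2 * f.1 * M 0 1 + f.2.2 * M 1 1)) * hdet

theorem slEquiv_iff_tailEquiv (hf : Irrational √(formDisc f : ℝ))
    (hdisc : formDisc f' = formDisc f) :
    SLEquiv f f' ↔ TailEquiv 1 (xiPlus f) (xiPlus f') := by
  have hf' : Irrational √(formDisc f' : ℝ) := hdisc ▸ hf
  rw [slEquiv_iff_exists_formComp,
    tailEquiv_iff_exists_moebius (irrational_xiPlus hf) (irrational_xiPlus hf')]
  refine exists_congr fun M => and_congr_right fun hM => ?_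
  have hcomp := moebius_xiPlus_formComp hf hM
  refine ⟨fun h => h ▸ hcomp, fun h => ?_⟩
  have hcompDisc : formDisc (formComp f M) = formDisc f := by simp [formDisc_formComp, hM]
  have hfc : Irrational √(formDisc (formComp f M) : ℝ) := hcompDisc ▸ hf
  exact eq_of_xiPlus_eq hfc (hdisc.trans hcompDisc.symm)
    (moebius_injOn_irrational (by simp [hM]) (irrational_xiPlus hf') (irrational_xiPlus hfc)
      (h.trans hcomp.symm))

theorem formDisc_conjF (f : ℤ × ℤ × ℤ) : formDisc (conjF f) = formDisc f := by
  simp only [formDisc, conjF]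
  ring

theorem formDisc_adjF (f : ℤ × ℤ × ℤ) : formDisc (adjF f) = formDisc f := by
  simp only [formDisc, adjF]
  ring

theorem formDisc_antipF (f : ℤ × ℤ × ℤ) : formDisc (antipF f) = formDisc f := by
  simp only [formDisc, antipF]
  ring

theorem xiPlus_conjF (f : ℤ × ℤ × ℤ) : xiPlus (conjF f) = -xiMinus f := by
  simp only [xiPlus, xiMinus, conjF, formDisc]
  push_cast
  ring_nf

theorem xiPlus_adjF (hf : Irrational √(formDisc f : ℝ)) : xiPlus (adjF f) = -(xiMinus f)⁻¹ := by
  have hne := (isQuadraticConj_xiPlus_xiMinus hf).irrational_right.ne_zero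
  rw [xiPlus_eq_iff (fst_ne_zero_of_irrational (formDisc_adjF f ▸ hf)), formDisc_adjF,
    ← two_mul_xiPlus_add hf]
  have hm : (f.1 : ℝ) ≠ 0 := by exact_mod_cast fst_ne_zero_of_irrational hf
  have hprod := xiPlus_mul_xiMinus hf
  field_simp at hprod
  simp only [adjF]
  push_cast
  field_simp
  linear_combination -2 * hprod

theorem xiPlus_antipF (hf : Irrational √(formDisc f : ℝ)) : xiPlus (antipF f) = (xiPlus f)⁻¹ := by
  rw [xiPlus_eq_iff (fst_ne_zero_of_irrational (formDisc_antipF f ▸ hf)), formDisc_antipF,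
    ← two_mul_xiPlus_add hf]
  have hne := (irrational_xiPlus hf).ne_zero
  simp only [antipF]
  push_cast
  field_simp
  linear_combination -2 * xiPlus_root hf

theorem slEquiv_conjF_iff (hf : Irrational √(formDisc f : ℝ)) :
    SLEquiv f (conjF f) ↔ TailEquiv (-1) (xiPlus f) (xiMinus f) := by
  have hirr := (isQuadraticConj_xiPlus_xiMinus hf).irrational_right
  rw [slEquiv_iff_tailEquiv hf (formDisc_conjF f), xiPlus_conjF,
    TailEquiv.congr_right (TailEquiv.neg hirr)]
  simp

theorem slEquiv_adjF_iff (hf : Irrational √(formDisc f : ℝ)) :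
    SLEquiv f (adjF f) ↔ TailEquiv 1 (xiPlus f) (xiMinus f) := by
  have hirr := (isQuadraticConj_xiPlus_xiMinus hf).irrational_right
  rw [slEquiv_iff_tailEquiv hf (formDisc_adjF f), xiPlus_adjF hf,
    TailEquiv.congr_right (TailEquiv.neg_inv hirr), mul_one]

theorem slEquiv_antipF_iff (hf : Irrational √(formDisc f : ℝ)) :
    SLEquiv f (antipF f) ↔ TailEquiv (-1) (xiPlus f) (xiPlus f) := by
  rw [slEquiv_iff_tailEquiv hf (formDisc_antipF f), xiPlus_antipF hf,
    TailEquiv.congr_right (TailEquiv.inv (irrational_xiPlus hf))]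
  simp

end Forms

/-- The period `Γ(m,n,k)` is even and neither palindromic nor bipalindromic iff the
class `C(m,n,k)` is asymmetric. -/
theorem statement8 (m n k : ℤ)
    (hpos : 0 < formDisc (m, n, k)) (hsq : ¬ IsSquare (formDisc (m, n, k))) :
    ∀ s : List ℤ, IsCFPeriod s (xiPlus (m, n, k)) →
      ((Even s.length ∧ ¬ Palindromic s ∧ ¬ Bipalindromic s) ↔
        (¬ SLEquiv (m, n, k) (conjF (m, n, k)) ∧ ¬ SLEquiv (m, n, k) (adjF (m, n, k)) ∧
          ¬ SLEquiv (m, n, k) (antipF (m, n, k)))) := by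
  intro s hs
  have hf : Irrational √(formDisc (m, n, k) : ℝ) :=
    irrational_sqrt_intCast_iff.mpr ⟨hsq, hpos.le⟩
  have hconj := isQuadraticConj_xiPlus_xiMinus hf
  have hsymm : Palindromic s ∨ Bipalindromic s ↔
      ∃ ε, TailEquiv ε (xiPlus (m, n, k)) (xiMinus (m, n, k)) :=
    palindromic_or_bipalindromic_iff_isRotated_reverse.trans
      (hs.exists_tailEquiv_iff_isRotated_reverse hconj).symm
  have hodd := hs.odd_length_iff hconj.irrational_left
  rw [← not_or, hsymm, TailEquiv.exists_iff, ← Nat.not_odd_iff_even, hodd, slEquiv_conjF_iff hf,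
    slEquiv_adjF_iff hf, slEquiv_antipF_iff hf]
  tauto
end

section
/- Let f=(m,n,k) be an integer binary quadratic form with discriminant Δ=k²−4mn>0 not a perfect square, let Γ(f)=[a_1,…,a_P] be the period of the continued fraction of ξ⁺(f), and let Π(f)=[a_1,…,a_p] be Γ(f) if P is even and Γ(f) repeated twice (p=2P) if P is odd. If P is odd, or if P is even and Γ(f) is palindromic, then the sum of the odd-indexed entries of Π(f) equals the sum of the even-indexed entries of Π(f), each being equal to (a_1+⋯+a_p)/2. -/
/-- The sum of the entries of the list `l` sitting at positions congruent to `r` mod 2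
(positions counted from 0). -/
def idxSum (l : List ℤ) (r : ℕ) : ℤ :=
  ∑ i ∈ Finset.range l.length, if i % 2 = r then l.getD i 0 else 0

/-!
The difference between the sums over the two index classes is the alternating sum of the list, so
everything reduces to the vanishing of the alternating sum of `Π`. For `Π = Γ ++ Γ` with `Γ` of odd
length the two copies of `Γ` enter with opposite signs. A palindrome of even length has vanishing
alternating sum because reversal negates it, and rotating a list of even length changes its
alternating sum at most by a sign.
-/

section AlternatingSum

variable {G : Type*} [AddCommGroup G] {l l' : List G}

theorem alternatingSum_append_self_of_odd_length (hl : Odd l.length) :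
    (l ++ l).alternatingSum = 0 := by
  rw [List.alternatingSum_append, hl.neg_one_pow, neg_one_zsmul, add_neg_cancel]

theorem alternatingSum_append_comm_of_even_length (h : Even (l ++ l').length) :
    (l' ++ l).alternatingSum = (-1 : ℤ) ^ l.length • (l ++ l').alternatingSum := by
  have hparity : (-1 : ℤ) ^ l'.length = (-1) ^ l.length :=
    neg_one_pow_congr (Nat.even_add.mp (List.length_append ▸ h)).symm
  rw [List.alternatingSum_append, List.alternatingSum_append, smul_add, smul_smul, ← mul_pow,
    hparity, neg_one_mul, neg_neg, one_pow, one_smul, add_comm]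

theorem alternatingSum_eq_zero_of_isRotated (h : l ~r l') (hl : Even l.length)
    (hzero : l.alternatingSum = 0) : l'.alternatingSum = 0 := by
  obtain ⟨r, hr, rfl⟩ := List.isRotated_iff_mod.mp h
  rw [← List.take_append_drop r l] at hl hzero
  rw [List.rotate_eq_drop_append_take hr, alternatingSum_append_comm_of_even_length hl, hzero,
    smul_zero]

theorem alternatingSum_eq_zero_of_reverse_eq [IsAddTorsionFree G] (hl : Even l.length)
    (hrev : l.reverse = l) : l.alternatingSum = 0 := by
  have hneg : l.alternatingSum = -l.alternatingSum := by
    simpa [hrev, pow_succ, hl.neg_one_pow] using List.alternatingSum_reverse l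
  exact self_eq_neg.mp hneg

end AlternatingSum

theorem Palindromic.alternatingSum_eq_zero {s : List ℤ} (hs : Palindromic s)
    (heven : Even s.length) : s.alternatingSum = 0 := by
  obtain ⟨t, hst, hrev⟩ := hs
  have ht : Even t.length := hst.perm.length_eq ▸ heven
  exact alternatingSum_eq_zero_of_isRotated hst.symm ht
    (alternatingSum_eq_zero_of_reverse_eq ht hrev)

theorem idxSum_zero_add_idxSum_one (l : List ℤ) : idxSum l 0 + idxSum l 1 = l.sum := by
  rw [idxSum, idxSum, ← Finset.sum_add_distrib, Finset.sum_range, ← Fin.sum_univ_getElem]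
  refine Finset.sum_congr rfl fun i _ => ?_
  rcases Nat.mod_two_eq_zero_or_one i with hi | hi <;> simp [hi]

theorem idxSum_zero_sub_idxSum_one (l : List ℤ) :
    idxSum l 0 - idxSum l 1 = l.alternatingSum := by
  rw [idxSum, idxSum, ← Finset.sum_sub_distrib, Finset.sum_range,
    List.alternatingSum_eq_finsetSum]
  refine Finset.sum_congr rfl fun i _ => ?_
  rcases Nat.even_or_odd i with hi | hi
  · simp [hi.neg_one_pow, Nat.even_iff.mp hi]
  · simp [hi.neg_one_pow, Nat.odd_iff.mp hi]

theorem idxSum_eq_of_alternatingSum_eq_zero {l : List ℤ} (h : l.alternatingSum = 0) :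
    idxSum l 0 = idxSum l 1 ∧ 2 * idxSum l 0 = l.sum := by
  have heq : idxSum l 0 = idxSum l 1 := sub_eq_zero.mp (idxSum_zero_sub_idxSum_one l ▸ h)
  refine ⟨heq, ?_⟩
  rw [← idxSum_zero_add_idxSum_one, ← heq, two_mul]

theorem statement12_general (s : List ℤ) (h : Odd s.length ∨ Palindromic s) :
    idxSum (if Even s.length then s else s ++ s) 0
        = idxSum (if Even s.length then s else s ++ s) 1 ∧
      2 * idxSum (if Even s.length then s else s ++ s) 0
        = (if Even s.length then s else s ++ s).sum := by
  apply idxSum_eq_of_alternatingSum_eq_zero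
  split_ifs with heven
  · have hpal : Palindromic s := h.resolve_left (Nat.not_odd_iff_even.mpr heven)
    exact hpal.alternatingSum_eq_zero heven
  · exact alternatingSum_append_self_of_odd_length (Nat.not_even_iff_odd.mp heven)

/-- If the period `Γ` is odd, or even and palindromic, then (with `Π = Γ` for even
period and `Π = Γ²` for odd period) the sum of the odd-indexed entries of `Π` equals
the sum of its even-indexed entries, each being half of the total sum. -/
theorem statement12 (m n k : ℤ)
    (hpos : 0 < formDisc (m, n, k)) (hsq : ¬ IsSquare (formDisc (m, n, k))) :
    ∀ s : List ℤ, IsCFPeriod s (xiPlus (m, n, k)) →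
      (Odd s.length ∨ (Even s.length ∧ Palindromic s)) →
      idxSum (if Even s.length then s else s ++ s) 0
          = idxSum (if Even s.length then s else s ++ s) 1 ∧
        2 * idxSum (if Even s.length then s else s ++ s) 0
          = (if Even s.length then s else s ++ s).sum :=
  fun s _ h => statement12_general s (h.imp_right And.right)
end

section
/- Let m,k be integers with k>m>0, let [a_1,…,a_L] be the even continued fraction of the rational number k/m, and set t=(a_1+⋯+a_L)−1. Then the number of integer triples (m',n',k') that are SL(2,ℤ)-equivalent to the form (m,0,k) and satisfy m'>0 and n'<0 is exactly t, and likewise the number of triples equivalent to (m,0,k) with m'<0 and n'>0 is exactly t. -/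
/-- The value of a finite regular continued fraction `[a₁, …, a_N]` as a rational number. -/
def cfEval : List ℤ → ℚ
  | [] => 0
  | [a] => (a : ℚ)
  | a :: l => (a : ℚ) + 1 / cfEval l

/-!
Write `f = x * (m * x + k * y)` for the form `(m, 0, k)`. Every form equivalent to `f` is `f ∘ γ`
with `γ ∈ SL(2, ℤ)` unique up to sign: an automorphism of `f` preserves or swaps the two lines on
which `f` vanishes, and the swap has determinant `-1`. If `γ` is normalised to have a positive upper
left entry, the condition `m' > 0 > n'` on `f ∘ γ` says exactly that `P = γ⁻¹` has nonnegative
entries, that its upper right entry is positive, and that `(m, k) = (r, s) * P` with `r, s > 0`.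

A nonnegative `P ≠ 1` of determinant one has one column dominating the other, so it factors through
`T` or its transpose; the matrices `P` with `(m, k) = (r, s) * P` are therefore the stages of the
subtractive Euclidean algorithm on `(m, k)`. Their number is the sum of the partial quotients of
`k / m`, and for `m ≤ k` only `P = 1` fails to have a positive upper right entry. The forms with
`m' < 0 < n'` are obtained from the others by the change of variables `S`.
-/

open Matrix ModularGroup
open scoped MatrixGroups

theorem SL2_det_eq_one (γ : SL(2, ℤ)) : γ 0 0 * γ 1 1 - γ 0 1 * γ 1 0 = 1 := by
  rw [← Matrix.det_fin_two, γ.det_coe]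

theorem SL2_eq_one_or_eq_neg_one_of_diagonal {γ : SL(2, ℤ)} (hb : γ 0 1 = 0) (hc : γ 1 0 = 0) :
    γ = 1 ∨ γ = -1 := by
  have had : γ 0 0 * γ 1 1 = 1 := by simpa [hb] using SL2_det_eq_one γ
  refine (Int.mul_eq_one_iff_eq_one_or_neg_one.1 had).imp ?_ ?_ <;>
  · rintro ⟨ha, hd⟩
    ext i j
    fin_cases i <;> fin_cases j <;> simp [*]

/-! ### The right action of `SL(2, ℤ)` on forms -/

theorem qval_injective : Function.Injective qval := by
  rintro ⟨m, n, k⟩ ⟨m', n', k'⟩ h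
  have h₁₀ : m = m' := by simpa [qval] using congr_fun₂ h 1 0
  have h₀₁ : n = n' := by simpa [qval] using congr_fun₂ h 0 1
  have h₁₁ : m + n + k = m' + n' + k' := by simpa [qval] using congr_fun₂ h 1 1
  simp only [Prod.mk.injEq]
  lia

/-- The form `f ∘ γ` obtained from `f` by the linear change of variables `γ`; this is the right
action of `SL(2, ℤ)` on forms whose orbits are the classes of `SLEquiv`. -/
def pullback (f : ℤ × ℤ × ℤ) (γ : SL(2, ℤ)) : ℤ × ℤ × ℤ :=
  (qval f (γ 0 0) (γ 1 0), qval f (γ 0 1) (γ 1 1),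
    2 * f.1 * γ 0 0 * γ 0 1 + 2 * f.2.1 * γ 1 0 * γ 1 1
      + f.2.2 * (γ 0 0 * γ 1 1 + γ 0 1 * γ 1 0))

theorem qval_pullback (f : ℤ × ℤ × ℤ) (γ : SL(2, ℤ)) (x y : ℤ) :
    qval (pullback f γ) x y = qval f (γ 0 0 * x + γ 0 1 * y) (γ 1 0 * x + γ 1 1 * y) := by
  simp only [pullback, qval]
  ring

theorem pullback_one (f : ℤ × ℤ × ℤ) : pullback f 1 = f :=
  qval_injective <| by ext x y; simp [qval_pullback]

theorem pullback_mul (f : ℤ × ℤ × ℤ) (γ δ : SL(2, ℤ)) :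
    pullback f (γ * δ) = pullback (pullback f γ) δ := by
  apply qval_injective
  ext x y
  simp only [qval_pullback, Matrix.SpecialLinearGroup.coe_mul, mul_apply, Fin.sum_univ_two]
  congr 1 <;> ring

theorem pullback_neg (f : ℤ × ℤ × ℤ) (γ : SL(2, ℤ)) : pullback f (-γ) = pullback f γ := by
  simp [pullback, qval]

theorem pullback_bijective (γ : SL(2, ℤ)) : Function.Bijective (pullback · γ) :=
  Function.bijective_iff_has_inverse.2 ⟨(pullback · γ⁻¹),
    fun f ↦ by simp only [← pullback_mul, mul_inv_cancel, pullback_one],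
    fun f ↦ by simp only [← pullback_mul, inv_mul_cancel, pullback_one]⟩

theorem slEquiv_iff_exists_pullback {f g : ℤ × ℤ × ℤ} :
    SLEquiv f g ↔ ∃ γ : SL(2, ℤ), pullback f γ = g := by
  constructor
  · rintro ⟨a, b, c, d, hdet, hg⟩
    let γ : SL(2, ℤ) := ⟨!![a, b; c, d], by rwa [det_fin_two_of]⟩
    exact ⟨γ, qval_injective <| funext₂ fun x y ↦ (qval_pullback f γ x y).trans (hg x y).symm⟩
  · rintro ⟨γ, rfl⟩
    exact ⟨γ 0 0, γ 0 1, γ 1 0, γ 1 1, SL2_det_eq_one γ, qval_pullback f γ⟩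

theorem slEquiv_pullback_iff {f g : ℤ × ℤ × ℤ} (γ : SL(2, ℤ)) :
    SLEquiv f (pullback g γ) ↔ SLEquiv f g := by
  simp only [slEquiv_iff_exists_pullback]
  constructor
  · rintro ⟨δ, hδ⟩
    exact ⟨δ * γ⁻¹, by rw [pullback_mul, hδ, ← pullback_mul, mul_inv_cancel, pullback_one]⟩
  · rintro ⟨δ, rfl⟩
    exact ⟨δ * γ, pullback_mul f δ γ⟩

theorem pullback_S (f : ℤ × ℤ × ℤ) : pullback f S = (f.2.1, f.1, -f.2.2) := by
  simp [pullback, qval]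

theorem ncard_slEquiv_neg_pos (f : ℤ × ℤ × ℤ) :
    {g : ℤ × ℤ × ℤ | SLEquiv f g ∧ g.1 < 0 ∧ 0 < g.2.1}.ncard
      = {g : ℤ × ℤ × ℤ | SLEquiv f g ∧ 0 < g.1 ∧ g.2.1 < 0}.ncard := by
  have hpre : {g : ℤ × ℤ × ℤ | SLEquiv f g ∧ g.1 < 0 ∧ 0 < g.2.1}
      = (pullback · S) ⁻¹' {g | SLEquiv f g ∧ 0 < g.1 ∧ g.2.1 < 0} := by
    ext g
    rw [Set.mem_preimage, Set.mem_ofPred_eq, Set.mem_ofPred_eq, slEquiv_pullback_iff, pullback_S]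
    tauto
  rw [hpre, Set.ncard_def, Set.encard_preimage_of_bijective (pullback_bijective S), Set.ncard_def]

theorem eq_one_or_eq_neg_one_of_pullback_eq_self {m k : ℤ} (hk : k ≠ 0) {γ : SL(2, ℤ)}
    (hγ : pullback (m, 0, k) γ = (m, 0, k)) : γ = 1 ∨ γ = -1 := by
  have hdet := SL2_det_eq_one γ
  simp only [pullback, qval, Prod.mk.injEq] at hγ
  obtain ⟨h₁, h₂, h₃⟩ := hγ
  have hb : γ 0 1 = 0 := by
    have hfactor : γ 0 1 * (m * γ 0 1 + k * γ 1 1) = 0 := by linear_combination h₂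
    refine (mul_eq_zero.1 hfactor).resolve_right fun hs ↦ hk ?_
    -- Otherwise `γ` swaps the two lines on which the form vanishes, hence has determinant `-1`.
    have : 2 * k = 0 := by linear_combination 2 * γ 0 0 * hs - h₃ - k * hdet
    lia
  have had : γ 0 0 * γ 1 1 = 1 := by rwa [hb, zero_mul, sub_zero] at hdet
  have hc : γ 1 0 = 0 := by
    rcases Int.eq_one_or_neg_one_of_mul_eq_one had with ha | ha <;> simpa [ha, hk] using h₁
  exact SL2_eq_one_or_eq_neg_one_of_diagonal hb hc

theorem eq_or_eq_neg_of_pullback_eq {m k : ℤ} (hk : k ≠ 0) {γ δ : SL(2, ℤ)}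
    (h : pullback (m, 0, k) γ = pullback (m, 0, k) δ) : γ = δ ∨ γ = -δ := by
  have hstab : pullback (m, 0, k) (γ * δ⁻¹) = (m, 0, k) := by
    rw [pullback_mul, h, ← pullback_mul, mul_inv_cancel, pullback_one]
  refine (eq_one_or_eq_neg_one_of_pullback_eq_self hk hstab).imp mul_inv_eq_one.1 fun hneg ↦ ?_
  rw [mul_inv_eq_iff_eq_mul.1 hneg, neg_one_mul]

/-! ### The matrices of the subtractive Euclidean algorithm -/

/-- The nonnegative matrices `P` of determinant one with `(m, n) = (r, s) * P` for some positive
`r` and `s`. They record the stages `(r, s)` of the subtractive Euclidean algorithm on `(m, n)`,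
the stage at which one entry vanishes being left out. -/
def euclidMatrices (m n : ℤ) : Set SL(2, ℤ) :=
  {P | (∀ i j, 0 ≤ P i j) ∧ ∃ r s : ℤ, 0 < r ∧ 0 < s ∧
    r * P 0 0 + s * P 1 0 = m ∧ r * P 0 1 + s * P 1 1 = n}

theorem one_mem_euclidMatrices {m n : ℤ} (hm : 0 < m) (hn : 0 < n) : 1 ∈ euclidMatrices m n :=
  ⟨fun i j ↦ by fin_cases i <;> fin_cases j <;> simp, m, n, hm, hn, by simp, by simp⟩

theorem euclidMatrices_zero_right (m : ℤ) : euclidMatrices m 0 = ∅ := by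
  refine Set.eq_empty_of_forall_notMem ?_
  rintro P ⟨hP, r, s, hr, hs, -, h⟩
  have hdet := SL2_det_eq_one P
  have hb := mul_nonneg hr.le (hP 0 1)
  have hd := mul_nonneg hs.le (hP 1 1)
  obtain ⟨hrb, hsd⟩ := (add_eq_zero_iff_of_nonneg hb hd).1 h
  simp [(mul_eq_zero.1 hrb).resolve_left hr.ne', (mul_eq_zero.1 hsd).resolve_left hs.ne'] at hdet

/-- Conjugation of `P` by the coordinate swap. -/
def swapConj (P : SL(2, ℤ)) : SL(2, ℤ) :=
  ⟨!![P 1 1, P 1 0; P 0 1, P 0 0], by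
    rw [det_fin_two_of]; linear_combination SL2_det_eq_one P⟩

theorem swapConj_involutive : Function.Involutive swapConj := fun P ↦ by
  ext i j
  fin_cases i <;> fin_cases j <;> rfl

theorem swapConj_mem_euclidMatrices {m n : ℤ} {P : SL(2, ℤ)} (hP : P ∈ euclidMatrices m n) :
    swapConj P ∈ euclidMatrices n m := by
  obtain ⟨hnonneg, r, s, hr, hs, hm, hn⟩ := hP
  refine ⟨fun i j ↦ ?_, s, r, hs, hr, ?_, ?_⟩
  · fin_cases i <;> fin_cases j <;> exact hnonneg _ _
  · rw [← hn, add_comm]; rfl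
  · rw [← hm, add_comm]; rfl

theorem encard_euclidMatrices_comm (m n : ℤ) :
    (euclidMatrices m n).encard = (euclidMatrices n m).encard := by
  have hpre : euclidMatrices m n = swapConj ⁻¹' euclidMatrices n m :=
    Set.Subset.antisymm (fun _ ↦ swapConj_mem_euclidMatrices) fun P hP ↦
      swapConj_involutive P ▸ swapConj_mem_euclidMatrices hP
  rw [hpre, Set.encard_preimage_of_bijective swapConj_involutive.bijective]

theorem eq_one_or_columns_le {P : SL(2, ℤ)} (hP : ∀ i j, 0 ≤ P i j) :
    P = 1 ∨ (∀ i, P i 0 ≤ P i 1) ∨ ∀ i, P i 1 ≤ P i 0 := by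
  have hdet := SL2_det_eq_one P
  simp only [Fin.forall_fin_two] at hP ⊢
  obtain ⟨⟨ha, hb⟩, hc, hd⟩ := hP
  rcases le_or_gt (P 0 0) (P 0 1) with hab | hab <;> rcases le_or_gt (P 1 1) (P 1 0) with hdc | hdc
  · have hprod : P 0 0 * P 1 1 ≤ P 0 1 * P 1 0 := mul_le_mul hab hdc hd hb
    linarith
  · exact .inr (.inl ⟨hab, hdc.le⟩)
  · exact .inr (.inr ⟨hab.le, hdc⟩)
  · have hprod : (P 0 1 + 1) * (P 1 0 + 1) ≤ P 0 0 * P 1 1 :=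
      mul_le_mul hab hdc (by positivity) ha
    have hsum : P 0 1 + P 1 0 ≤ 0 := by linarith
    left
    refine (SL2_eq_one_or_eq_neg_one_of_diagonal (by lia) (by lia)).resolve_right ?_
    rintro rfl
    simp at ha

theorem mul_T_apply_zero (P : SL(2, ℤ)) (i : Fin 2) : (P * T) i 0 = P i 0 := by
  simp [mul_apply]

theorem mul_T_apply_one (P : SL(2, ℤ)) (i : Fin 2) : (P * T) i 1 = P i 0 + P i 1 := by
  simp [mul_apply]

theorem mul_T_mem_euclidMatrices_iff {m n : ℤ} {P : SL(2, ℤ)} (hP : ∀ i, 0 ≤ P i 1) :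
    P * T ∈ euclidMatrices m (m + n) ↔ P ∈ euclidMatrices m n := by
  simp only [euclidMatrices, Set.mem_ofPred_eq, Fin.forall_fin_two, mul_T_apply_zero,
    mul_T_apply_one] at hP ⊢
  constructor
  · rintro ⟨⟨⟨ha, -⟩, hc, -⟩, r, s, hr, hs, hm, hn⟩
    exact ⟨⟨⟨ha, hP.1⟩, hc, hP.2⟩, r, s, hr, hs, hm, by linarith⟩
  · rintro ⟨⟨⟨ha, hb⟩, hc, hd⟩, r, s, hr, hs, hm, hn⟩
    exact ⟨⟨⟨ha, add_nonneg ha hb⟩, hc, add_nonneg hc hd⟩, r, s, hr, hs, hm, by linarith⟩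

theorem columns_le_of_mem_euclidMatrices {m n : ℤ} (hmn : m ≤ n) {P : SL(2, ℤ)}
    (hP : P ∈ euclidMatrices m n) (hone : P ≠ 1) : ∀ i, P i 0 ≤ P i 1 := by
  obtain ⟨hnonneg, r, s, hr, hs, hm, hn⟩ := hP
  refine ((eq_one_or_columns_le hnonneg).resolve_left hone).resolve_right fun hcol ↦ ?_
  have h₀ : P 0 0 = P 0 1 := by nlinarith [hcol 0, hcol 1]
  have h₁ : P 1 0 = P 1 1 := by nlinarith [hcol 0, hcol 1]
  have hdet := SL2_det_eq_one P
  rw [h₀, h₁, sub_self] at hdet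
  exact zero_ne_one hdet

theorem euclidMatrices_add_right {m n : ℤ} (hm : 0 < m) (hn : 0 ≤ n) :
    euclidMatrices m (m + n) = insert 1 ((· * T) '' euclidMatrices m n) := by
  refine Set.Subset.antisymm (fun P hP ↦ ?_) (Set.insert_subset ?_ ?_)
  · refine or_iff_not_imp_left.2 fun hone ↦ ?_
    have hcol := columns_le_of_mem_euclidMatrices (by lia) hP hone
    obtain ⟨Q, rfl⟩ : ∃ Q, P = Q * T := ⟨P * T⁻¹, by group⟩
    simp only [mul_T_apply_zero, mul_T_apply_one, le_add_iff_nonneg_right] at hcol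
    exact ⟨Q, (mul_T_mem_euclidMatrices_iff hcol).1 hP, rfl⟩
  · exact one_mem_euclidMatrices hm (by lia)
  · rintro _ ⟨Q, hQ, rfl⟩
    exact (mul_T_mem_euclidMatrices_iff fun i ↦ hQ.1 i 1).2 hQ

theorem encard_euclidMatrices_add_right {m n : ℤ} (hm : 0 < m) (hn : 0 ≤ n) :
    (euclidMatrices m (m + n)).encard = (euclidMatrices m n).encard + 1 := by
  have hone : (1 : SL(2, ℤ)) ∉ (· * T) '' euclidMatrices m n := by
    rintro ⟨Q, hQ, hQT : Q * T = 1⟩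
    have hnonneg := hQ.1 0 1
    rw [eq_inv_of_mul_eq_one_left hQT, coe_T_inv] at hnonneg
    simp at hnonneg
  rw [euclidMatrices_add_right hm hn, Set.encard_insert_of_notMem hone,
    (mul_left_injective T).encard_image]

theorem encard_euclidMatrices_natCast_mul_add {m n : ℤ} (hm : 0 < m) (hn : 0 ≤ n) (a : ℕ) :
    (euclidMatrices m (a * m + n)).encard = a + (euclidMatrices m n).encard := by
  induction a with
  | zero => simp
  | succ a ih =>
    have hsucc : ((a + 1 : ℕ) : ℤ) * m + n = m + (a * m + n) := by push_cast; ring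
    rw [hsucc, encard_euclidMatrices_add_right hm (by positivity), ih, Nat.cast_succ,
      add_right_comm]

/-! ### Continued fractions -/

-- For `l = []` both sides are `a`, since `1 / 0 = 0`.
theorem cfEval_cons (a : ℤ) (l : List ℤ) : cfEval (a :: l) = a + 1 / cfEval l := by
  cases l <;> simp [cfEval]

theorem cfEval_nonneg {l : List ℤ} (hpos : ∀ a ∈ l, 0 ≤ a) : 0 ≤ cfEval l := by
  induction l with
  | nil => rfl
  | cons a l ih =>
    rw [List.forall_mem_cons] at hpos
    have := ih hpos.2
    have : (0 : ℚ) ≤ a := mod_cast hpos.1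
    rw [cfEval_cons]
    positivity

theorem one_le_cfEval {l : List ℤ} (hpos : ∀ a ∈ l, 1 ≤ a) (hl : l ≠ []) : 1 ≤ cfEval l := by
  obtain ⟨a, l, rfl⟩ := List.exists_cons_of_ne_nil hl
  rw [List.forall_mem_cons] at hpos
  have ha : (1 : ℚ) ≤ a := mod_cast hpos.1
  have := cfEval_nonneg fun b hb ↦ zero_le_one.trans (hpos.2 b hb)
  rw [cfEval_cons]
  exact le_add_of_le_of_nonneg ha (by positivity)

theorem encard_euclidMatrices_of_cfEval_eq {l : List ℤ} (hpos : ∀ a ∈ l, 1 ≤ a) {m n : ℤ}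
    (hm : 0 ≤ m) (hn : 0 ≤ n) (hval : cfEval l = n / m) :
    (euclidMatrices m n).encard = l.sum.toNat := by
  induction l generalizing m n with
  | nil =>
    rcases div_eq_zero_iff.1 hval.symm with h | h
    · rw [Int.cast_eq_zero.1 h, euclidMatrices_zero_right]
      simp
    · rw [Int.cast_eq_zero.1 h, encard_euclidMatrices_comm, euclidMatrices_zero_right]
      simp
  | cons a l ih =>
    have hcf := one_le_cfEval hpos (List.cons_ne_nil a l)
    rw [List.forall_mem_cons] at hpos
    have hm₀ : m ≠ 0 := by
      rintro rfl
      norm_num [hval] at hcf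
    have hmq : (0 : ℚ) < m := mod_cast hm.lt_of_ne' hm₀
    have htail : 1 / cfEval l = ((n - a * m : ℤ) : ℚ) / m := by
      rw [cfEval_cons] at hval
      rw [eq_sub_of_add_eq' hval]
      push_cast
      field_simp
    have hrem : 0 ≤ n - a * m := by
      have hnonneg := cfEval_nonneg fun b hb ↦ zero_le_one.trans (hpos.2 b hb)
      have hdiv : (0 : ℚ) ≤ ((n - a * m : ℤ) : ℚ) / m := htail ▸ one_div_nonneg.2 hnonneg
      exact_mod_cast nonneg_of_mul_nonneg_left (div_eq_mul_inv _ (m : ℚ) ▸ hdiv) (inv_pos.2 hmq)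
    -- If `l = []`, then `n - a * m = 0` and this reads `0 = m / 0`.
    have htail' : cfEval l = m / (n - a * m : ℤ) := by
      rw [← one_div_one_div (cfEval l), htail, one_div_div]
    lift a to ℕ using zero_le_one.trans hpos.1
    have hsum : 0 ≤ l.sum := List.sum_nonneg fun b hb ↦ zero_le_one.trans (hpos.2 b hb)
    calc (euclidMatrices m n).encard
        = (euclidMatrices m (a * m + (n - a * m))).encard := by rw [add_sub_cancel]
      _ = a + (euclidMatrices (n - a * m) m).encard := by
        rw [encard_euclidMatrices_natCast_mul_add (by lia) hrem, encard_euclidMatrices_comm m]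
      _ = a + l.sum.toNat := by rw [ih hpos.2 hrem hm htail']
      _ = ((a : ℤ) :: l).sum.toNat := by
        rw [List.sum_cons, Int.toNat_add (by lia) hsum, Int.toNat_natCast, Nat.cast_add]

/-! ### Indefinite forms in the class of `(m, 0, k)` -/

theorem SL2_inv_apply (γ : SL(2, ℤ)) :
    γ⁻¹ 0 0 = γ 1 1 ∧ γ⁻¹ 0 1 = -γ 0 1 ∧ γ⁻¹ 1 0 = -γ 1 0 ∧ γ⁻¹ 1 1 = γ 0 0 := by
  simp [adjugate_fin_two]

theorem pullback_inv_pos_neg {m k : ℤ} {P : SL(2, ℤ)} (hP : P ∈ euclidMatrices m k)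
    (hb : 0 < P 0 1) :
    0 < (pullback (m, 0, k) P⁻¹).1 ∧ (pullback (m, 0, k) P⁻¹).2.1 < 0 := by
  obtain ⟨hnonneg, r, s, hr, hs, rfl, rfl⟩ := hP
  have hdet := SL2_det_eq_one P
  have hd : 0 < P 1 1 := (hnonneg 1 1).lt_of_ne' fun hd ↦ by
    rw [hd] at hdet
    nlinarith [hnonneg 1 0]
  obtain ⟨h₀₀, h₀₁, h₁₀, h₁₁⟩ := SL2_inv_apply P
  simp only [pullback, qval, h₀₀, h₀₁, h₁₀, h₁₁]
  constructor
  · calc 0 < P 1 1 * r := mul_pos hd hr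
      _ = _ := by linear_combination -P 1 1 * r * hdet
  · calc _ = -(P 0 1 * s) := by linear_combination -P 0 1 * s * hdet
      _ < 0 := neg_neg_of_pos (mul_pos hb hs)

theorem inv_mem_euclidMatrices {m k : ℤ} (hm : 0 < m) (hk : 0 < k) {γ : SL(2, ℤ)}
    (ha : 0 < γ 0 0) (hfst : 0 < (pullback (m, 0, k) γ).1)
    (hsnd : (pullback (m, 0, k) γ).2.1 < 0) :
    γ⁻¹ ∈ euclidMatrices m k ∧ 0 < γ⁻¹ 0 1 := by
  have hdet := SL2_det_eq_one γ
  obtain ⟨r, hr⟩ : ∃ r, r = m * γ 0 0 + k * γ 1 0 := ⟨_, rfl⟩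
  obtain ⟨s, hs⟩ : ∃ s, s = m * γ 0 1 + k * γ 1 1 := ⟨_, rfl⟩
  have hfst' : (pullback (m, 0, k) γ).1 = γ 0 0 * r := by
    simp only [pullback, qval, hr]
    ring
  have hsnd' : (pullback (m, 0, k) γ).2.1 = γ 0 1 * s := by
    simp only [pullback, qval, hs]
    ring
  have hr₀ : 0 < r := pos_of_mul_pos_right (hfst' ▸ hfst) ha.le
  obtain ⟨hb, hs₀⟩ : γ 0 1 < 0 ∧ 0 < s := by
    refine (mul_neg_iff.1 (hsnd' ▸ hsnd)).resolve_left fun ⟨hb, hs₀⟩ ↦ ?_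
    have hk' : k = γ 0 0 * s - γ 0 1 * r := by rw [hr, hs]; linear_combination -k * hdet
    linarith [mul_neg_of_pos_of_neg ha hs₀, mul_pos hb hr₀]
  have hd : 0 < γ 1 1 := by
    have hkd : 0 < k * γ 1 1 := by linarith [mul_neg_of_pos_of_neg hm hb]
    exact pos_of_mul_pos_right hkd hk.le
  have hc : γ 1 0 ≤ 0 := by
    have hbc : 0 ≤ γ 0 1 * γ 1 0 := by linarith [mul_pos ha hd]
    exact nonpos_of_mul_nonneg_right hbc hb
  obtain ⟨h₀₀, h₀₁, h₁₀, h₁₁⟩ := SL2_inv_apply γ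
  simp only [euclidMatrices, Set.mem_ofPred_eq, Fin.forall_fin_two, h₀₀, h₀₁, h₁₀, h₁₁]
  refine ⟨⟨⟨⟨hd.le, by lia⟩, by lia, ha.le⟩, r, s, hr₀, hs₀, ?_, ?_⟩, by lia⟩
  · rw [hr, hs]; linear_combination m * hdet
  · rw [hr, hs]; linear_combination k * hdet

theorem setOf_slEquiv_pos_neg {m k : ℤ} (hm : 0 < m) (hk : 0 < k) :
    {g : ℤ × ℤ × ℤ | SLEquiv (m, 0, k) g ∧ 0 < g.1 ∧ g.2.1 < 0}
      = (pullback (m, 0, k) ·⁻¹) '' {P ∈ euclidMatrices m k | 0 < P 0 1} := by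
  ext g
  simp only [Set.mem_ofPred_eq, Set.mem_image]
  constructor
  · rintro ⟨hg, hfst, hsnd⟩
    obtain ⟨γ, rfl⟩ := slEquiv_iff_exists_pullback.1 hg
    rcases lt_trichotomy (γ 0 0) 0 with ha | ha | ha
    · rw [← pullback_neg] at hfst hsnd
      have hneg : 0 < (-γ) 0 0 := by simpa using ha
      exact ⟨(-γ)⁻¹, inv_mem_euclidMatrices hm hk hneg hfst hsnd, by rw [inv_inv, pullback_neg]⟩
    · simp [pullback, qval, ha] at hfst
    · exact ⟨γ⁻¹, inv_mem_euclidMatrices hm hk ha hfst hsnd, by rw [inv_inv]⟩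
  · rintro ⟨P, ⟨hP, hb⟩, rfl⟩
    exact ⟨slEquiv_iff_exists_pullback.2 ⟨P⁻¹, rfl⟩, pullback_inv_pos_neg hP hb⟩

theorem injOn_pullback_inv {m k : ℤ} (hk : k ≠ 0) :
    Set.InjOn (pullback (m, 0, k) ·⁻¹) {P : SL(2, ℤ) | ∀ i j, 0 ≤ P i j} := by
  intro P hP Q hQ h
  refine inv_injective ((eq_or_eq_neg_of_pullback_eq hk h).resolve_right fun hneg ↦ ?_)
  have hPQ : P = -Q := by rw [← _root_.inv_inj, inv_neg, hneg]
  have hzero : ∀ i j, P i j = 0 := fun i j ↦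
    le_antisymm (by rw [hPQ]; simpa using hQ i j) (hP i j)
  simpa [hzero] using SL2_det_eq_one P

theorem sep_euclidMatrices_pos {m k : ℤ} (hmk : m ≤ k) :
    {P ∈ euclidMatrices m k | 0 < P 0 1} = euclidMatrices m k \ {1} := by
  ext P
  refine and_congr_right fun hP ↦ ⟨fun hb hone ↦ ?_, fun hone ↦ ?_⟩
  · simp [Set.mem_singleton_iff.1 hone] at hb
  · have hcol := columns_le_of_mem_euclidMatrices hmk hP hone 0
    have hdet := SL2_det_eq_one P
    refine (hP.1 0 1).lt_of_ne' fun hb ↦ ?_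
    have ha : P 0 0 = 0 := le_antisymm (hb ▸ hcol) (hP.1 0 0)
    simp [ha, hb] at hdet

theorem ncard_slEquiv_pos_neg {m k : ℤ} (hm : 0 < m) (hmk : m ≤ k) :
    {g : ℤ × ℤ × ℤ | SLEquiv (m, 0, k) g ∧ 0 < g.1 ∧ g.2.1 < 0}.ncard
      = (euclidMatrices m k).ncard - 1 := by
  have hk : 0 < k := hm.trans_le hmk
  rw [setOf_slEquiv_pos_neg hm hk,
    ((injOn_pullback_inv hk.ne').mono fun P hP ↦ hP.1.1).ncard_image, sep_euclidMatrices_pos hmk,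
    Set.ncard_sdiff_singleton_of_mem (one_mem_euclidMatrices hm hk)]

theorem statement13_general (m k : ℤ) (hm : 0 < m) (hk : 0 < k)
    (l : List ℤ) (hpos : ∀ a ∈ l, 1 ≤ a) (hval : cfEval l = (k : ℚ) / (m : ℚ)) :
    ({g : ℤ × ℤ × ℤ | SLEquiv (m, 0, k) g ∧ 0 < g.1 ∧ g.2.1 < 0}.ncard : ℤ)
        = l.sum - 1 ∧
      ({g : ℤ × ℤ × ℤ | SLEquiv (m, 0, k) g ∧ g.1 < 0 ∧ 0 < g.2.1}.ncard : ℤ)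
        = l.sum - 1 := by
  have hmq : (0 : ℚ) < m := mod_cast hm
  have hkq : (0 : ℚ) < k := mod_cast hk
  have hl : l ≠ [] := by
    rintro rfl
    exact (div_pos hkq hmq).ne hval
  have hmk : m ≤ k := by
    have hone := one_le_cfEval hpos hl
    rw [hval, one_le_div hmq] at hone
    exact_mod_cast hone
  have hsum : 0 < l.sum := List.sum_pos l (fun a ha ↦ zero_lt_one.trans_le (hpos a ha)) hl
  have hcard : (euclidMatrices m k).ncard = l.sum.toNat := by
    rw [Set.ncard_def, encard_euclidMatrices_of_cfEval_eq hpos hm.le hk.le hval, ENat.toNat_natCast]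
  rw [ncard_slEquiv_neg_pos, ncard_slEquiv_pos_neg hm hmk, hcard, and_self]
  lia

/-- If `[a₁, …, a_L]` is the even continued fraction of `k/m` (for `k > m > 0`) and
`t = a₁ + ⋯ + a_L − 1`, then the class of `(m,0,k)` has exactly `t` points with
`m' > 0, n' < 0` and exactly `t` points with `m' < 0, n' > 0`. -/
theorem statement13 (m k : ℤ) (hm : 0 < m) (hk : m < k)
    (l : List ℤ) (hpos : ∀ a ∈ l, 1 ≤ a) (hlen : Even l.length)
    (hval : cfEval l = (k : ℚ) / (m : ℚ)) :
    ({g : ℤ × ℤ × ℤ | SLEquiv (m, 0, k) g ∧ 0 < g.1 ∧ g.2.1 < 0}.ncard : ℤ)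
        = l.sum - 1 ∧
      ({g : ℤ × ℤ × ℤ | SLEquiv (m, 0, k) g ∧ g.1 < 0 ∧ 0 < g.2.1}.ncard : ℤ)
        = l.sum - 1 :=
  statement13_general m k hm (hm.trans hk) l hpos hval
end
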